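/- Let n ≥ 2 and let (B_m(t))_{m ≥ 0} be the family of polynomials in ℚ[t] determined by the formal power series identities B_m(t) = (1−t)^{m+1} · Σ_{k ≥ 0} (2k+1)^m t^k for every m ≥ 0. If n is a power of 2, then n(1+t)² · Σ_{π ∈ 𝔠_n} 2^{udr(π)} t^{udr(π)} (1+t²)^{n−udr(π)} = 2(2^n A_n(t²) + t·B_n(t²) − t(1−t²)^n); otherwise, n(1+t)² · Σ_{π ∈ 𝔠_n} 2^{udr(π)} t^{udr(π)} (1+t²)^{n−udr(π)} = 2 Σ_{d ∣ n, d odd} μ(d) (1−t²)^{n−n/d} (2^{n/d} A_{n/d}(t²) + t·B_{n/d}(t²)). (These are the stated formulas for C_n^{udr}(2t/(1+t²)), where C_n^{udr}(t) = Σ_{π ∈ 𝔠_n} t^{udr(π)}, with denominators cleared; note udr(π) ≤ n for every π ∈ S_n.) -/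

import Mathlib

open scoped Classical

noncomputable section

def oneLine (n : ℕ) (π : Equiv.Perm (Fin n)) (i : ℕ) : ℕ :=
  if h : 1 ≤ i ∧ i ≤ n then (π ⟨i - 1, by omega⟩).val + 1 else 0

def des (n : ℕ) (π : Equiv.Perm (Fin n)) : ℕ :=
  ((Finset.Icc 1 (n - 1)).filter fun i => oneLine n π (i + 1) < oneLine n π i).card

def pk (n : ℕ) (π : Equiv.Perm (Fin n)) : ℕ :=
  ((Finset.Icc 2 (n - 1)).filter fun i =>
    oneLine n π (i - 1) < oneLine n π i ∧ oneLine n π (i + 1) < oneLine n π i).card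

def lpk (n : ℕ) (π : Equiv.Perm (Fin n)) : ℕ :=
  ((Finset.Icc 1 (n - 1)).filter fun i =>
    oneLine n π (i - 1) < oneLine n π i ∧ oneLine n π (i + 1) < oneLine n π i).card

def pval (n : ℕ) (π : Equiv.Perm (Fin n)) : ℕ :=
  ((Finset.Icc 2 (n - 1)).filter fun i =>
    oneLine n π i < oneLine n π (i - 1) ∧ oneLine n π i < oneLine n π (i + 1)).card

def udr (n : ℕ) (π : Equiv.Perm (Fin n)) : ℕ := lpk n π + pval n π + 1

def fullCycleType (n : ℕ) (π : Equiv.Perm (Fin n)) : Multiset ℕ :=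
  π.cycleType + Multiset.replicate (n - π.support.card) 1

def numCycles (n : ℕ) (π : Equiv.Perm (Fin n)) : ℕ := Multiset.card (fullCycleType n π)

def numOddCycles (n : ℕ) (π : Equiv.Perm (Fin n)) : ℕ :=
  Multiset.card ((fullCycleType n π).filter fun p => p % 2 = 1)

def IsCyclicPerm (n : ℕ) (π : Equiv.Perm (Fin n)) : Prop :=
  fullCycleType n π = {n}

def cyclicSet (n : ℕ) : Finset (Equiv.Perm (Fin n)) :=
  Finset.univ.filter fun π => IsCyclicPerm n π

def invSet (n : ℕ) : Finset (Equiv.Perm (Fin n)) :=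
  Finset.univ.filter fun π => π ^ 2 = 1

def eulerianA (m : ℕ) : Polynomial ℚ :=
  ∑ π : Equiv.Perm (Fin m), Polynomial.X ^ (des m π + 1)

def peakP (m : ℕ) : Polynomial ℚ :=
  ∑ π : Equiv.Perm (Fin m), Polynomial.X ^ (pk m π + 1)

def leftPeakP (m : ℕ) : Polynomial ℚ :=
  ∑ π : Equiv.Perm (Fin m), Polynomial.X ^ (lpk m π)

def cnk (n k : ℕ) : ℕ :=
  (Finset.univ.filter fun π : Equiv.Perm (Fin n) =>
    (∀ p ∈ fullCycleType n π, ¬ (4 ∣ p)) ∧ numCycles n (π ^ 2) = k).card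

def bnk (n k : ℕ) : ℕ :=
  (Finset.univ.filter fun π : Equiv.Perm (Fin n) => numCycles n (π ^ 2) = k).card

def dnk (n k : ℕ) : ℕ :=
  (Finset.univ.filter fun π : Equiv.Perm (Fin n) => numOddCycles n (π ^ 2) = k).card



def cntS (ok : ℕ → ℕ → Prop) : ℕ → ℕ → ℕ
  | 0, j => if j = 0 then 1 else 0
  | k + 1, j => (∑ i ∈ Finset.range j, cntS ok k i) + if ok k j then cntS ok k j else 0

lemma cntS_zero (ok : ℕ → ℕ → Prop) (h0 : ¬ ok 0 0) (k : ℕ) : cntS ok (k + 1) 0 = 0 := by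
  induction k with
  | zero => simp [cntS, h0]
  | succ k ih => rw [cntS]; simp [ih]

lemma card_last (ok : ℕ → ℕ → Prop) (h0 : ¬ ok 0 0) (m k : ℕ) (j : Fin m) :
    (Finset.univ.filter fun f : Fin (k + 1) → Fin m =>
      (∀ i : Fin k, f i.castSucc < f i.succ ∨
        (f i.castSucc = f i.succ ∧ ok (i + 1) ((f i.castSucc : ℕ) + 1))) ∧ f (Fin.last k) = j).card
      = cntS ok (k + 1) (j + 1) := by
  induction k generalizing j with
  | zero =>
    have h1 : cntS ok (0 + 1) (j + 1) = 1 := by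
      simp [cntS]
    rw [h1, Finset.card_eq_one]
    refine ⟨fun _ => j, ?_⟩
    ext f
    simp only [Finset.mem_filter, Finset.mem_univ, true_and, Finset.mem_singleton]
    constructor
    · rintro ⟨-, h⟩
      funext i
      rw [← h]; congr 1; apply Fin.ext; have := i.isLt; simp only [Fin.val_last]; omega
    · rintro rfl
      exact ⟨fun i => i.elim0, rfl⟩
  | succ k ih =>
    have key : (Finset.univ.filter fun f : Fin (k + 2) → Fin m =>
      (∀ i : Fin (k + 1), f i.castSucc < f i.succ ∨
        (f i.castSucc = f i.succ ∧ ok (i + 1) ((f i.castSucc : ℕ) + 1))) ∧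
          f (Fin.last (k + 1)) = j).card
      = ((Finset.univ.filter fun i : Fin m => i < j ∨ (i = j ∧ ok (k + 1) (i + 1))).sigma fun i =>
          Finset.univ.filter fun f : Fin (k + 1) → Fin m =>
      (∀ i : Fin k, f i.castSucc < f i.succ ∨
        (f i.castSucc = f i.succ ∧ ok (i + 1) ((f i.castSucc : ℕ) + 1))) ∧ f (Fin.last k) = i).card := by
      refine Finset.card_bij' (fun f _ => ⟨f (Fin.last k).castSucc, Fin.init f⟩)
        (fun p _ => Fin.snoc (α := fun _ => Fin m) p.2 j) ?_ ?_ ?_ ?_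
      · intro f hf
        simp only [Finset.mem_filter, Finset.mem_univ, true_and, Finset.mem_sigma] at hf ⊢
        obtain ⟨h1, h2⟩ := hf
        refine ⟨?_, fun i => ?_, rfl⟩
        · have := h1 (Fin.last k)
          rw [Fin.succ_last, h2] at this
          rw [Fin.val_last] at this
          rcases this with h | ⟨h, h'⟩
          · exact Or.inl h
          · exact Or.inr ⟨h, h'⟩
        · have := h1 i.castSucc
          rw [Fin.succ_castSucc] at this; exact this
      · rintro ⟨i, f⟩ hf
        simp only [Finset.mem_filter, Finset.mem_univ, true_and, Finset.mem_sigma] at hf ⊢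
        obtain ⟨h1, h2, h3⟩ := hf
        refine ⟨?_, by simp⟩
        intro l
        refine Fin.lastCases ?_ (fun l => ?_) l
        · rw [Fin.succ_last, Fin.snoc_last, Fin.snoc_castSucc, h3]
          simpa using h1
        · rw [Fin.succ_castSucc, Fin.snoc_castSucc, Fin.snoc_castSucc]
          simpa using h2 l
      · intro f hf
        simp only [Finset.mem_filter, Finset.mem_univ, true_and] at hf
        simp only
        rw [← hf.2]
        exact Fin.snoc_init_self f
      · rintro ⟨i, f⟩ hf
        simp only [Finset.mem_filter, Finset.mem_univ, true_and, Finset.mem_sigma] at hf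
        obtain ⟨h1, h2, h3⟩ := hf
        simp only [Fin.snoc_castSucc, Fin.init_snoc]
        rw [h3]
    rw [key, Finset.card_sigma]
    rw [Finset.sum_congr rfl (fun i _ => ih i)]
    rw [cntS, Finset.sum_range_succ', cntS_zero ok h0 k, add_zero]
    have e1 : ∑ i ∈ Finset.range (j : ℕ), cntS ok (k + 1) (i + 1)
        = ∑ i ∈ Finset.univ.filter (fun i : Fin m => i < j), cntS ok (k + 1) (i + 1) := by
      symm
      refine Finset.sum_bij (fun i _ => (i : ℕ)) ?_ ?_ ?_ ?_
      · intro a ha; simpa using ha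
      · intro a _ b _ h; exact Fin.ext h
      · intro b hb
        have hb' : b < j := by simpa using hb
        exact ⟨⟨b, by omega⟩, Finset.mem_filter.2 ⟨Finset.mem_univ _, Fin.lt_def.2 hb'⟩, rfl⟩
      · intro a _; rfl
    rw [e1]
    rw [Finset.filter_or, Finset.sum_union]
    · congr 1
      have : (Finset.univ.filter fun i : Fin m => i = j ∧ ok (k + 1) (i + 1))
         = if ok (k + 1) (j + 1) then {j} else ∅ := by
        split_ifs with h
        · ext i; simp only [Finset.mem_filter, Finset.mem_univ, true_and, Finset.mem_singleton]
          constructor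
          · exact fun h => h.1
          · rintro rfl; exact ⟨rfl, h⟩
        · ext i; simp only [Finset.mem_filter, Finset.mem_univ, true_and, Finset.notMem_empty, iff_false]
          rintro ⟨rfl, h'⟩; exact h h'
      rw [this]
      split_ifs <;> simp
    · rw [Finset.disjoint_filter]
      rintro a - h1 ⟨h2, -⟩
      exact absurd h1 (by simp [h2])

lemma card_all (ok : ℕ → ℕ → Prop) (h0 : ¬ ok 0 0) (m k : ℕ) :
    (Finset.univ.filter fun f : Fin (k + 1) → Fin m =>
      (∀ i : Fin k, f i.castSucc < f i.succ ∨
        (f i.castSucc = f i.succ ∧ ok (i + 1) ((f i.castSucc : ℕ) + 1)))).card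
      = ∑ j ∈ Finset.range (m + 1), cntS ok (k + 1) j := by
  rw [Finset.sum_range_succ', cntS_zero ok h0 k, add_zero, Finset.sum_range]
  rw [Finset.sum_congr rfl (fun i _ => (card_last ok h0 m k i).symm)]
  rw [Finset.card_eq_sum_card_fiberwise (f := fun f => f (Fin.last k)) (t := Finset.univ)
    (fun _ _ => Finset.mem_coe.2 (Finset.mem_univ _))]
  simp only [Finset.filter_filter]

/-- pairs condition -/
def Valid (pos : ℕ → Prop) {n m : ℕ} (π : Equiv.Perm (Fin n)) (f : Fin n → Fin m) : Prop :=
  ∀ i j, i < j → f i < f j ∨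
    (f i = f j ∧ if pos (f i) then π i < π j else π j < π i)

def vcount (pos : ℕ → Prop) (n m : ℕ) (π : Equiv.Perm (Fin n)) : ℕ :=
  (Finset.univ.filter fun f : Fin n → Fin m => Valid pos π f).card

def upS (n : ℕ) (π : Equiv.Perm (Fin n)) (i : ℕ) : Prop := oneLine n π i < oneLine n π (i + 1)

lemma oneLine_succ (n : ℕ) (π : Equiv.Perm (Fin n)) (i : Fin n) :
    oneLine n π (i + 1) = (π i : ℕ) + 1 := by
  unfold oneLine
  rw [dif_pos ⟨by omega, by omega⟩]
  simp

lemma valid_iff (pos : ℕ → Prop) {k m : ℕ} (π : Equiv.Perm (Fin (k + 1))) (f : Fin (k + 1) → Fin m) :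
    Valid pos π f ↔ ∀ i : Fin k, f i.castSucc < f i.succ ∨
        (f i.castSucc = f i.succ ∧
         (if upS (k + 1) π (i + 1) then pos (f i.castSucc) else ¬ pos (f i.castSucc))) := by
  let r : (Fin (k + 1)) → (Fin (k + 1)) → Prop := fun i j => f i < f j ∨
    (f i = f j ∧ if pos (f i) then π i < π j else π j < π i)
  have : IsTrans _ r := ⟨by
    intro a b c hab hbc
    simp only [r] at hab hbc ⊢
    rcases hab with h1 | ⟨h1, h1'⟩ <;> rcases hbc with h2 | ⟨h2, h2'⟩
    · exact Or.inl (h1.trans h2)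
    · exact Or.inl (h2 ▸ h1)
    · exact Or.inl (h1 ▸ h2)
    · refine Or.inr ⟨h1.trans h2, ?_⟩
      rw [h1] at h1' ⊢
      split_ifs at * with h
      · exact h1'.trans h2'
      · exact h2'.trans h1'⟩
  have := Fin.liftFun_iff_succ r (f := id)
  have e : Valid pos π f ↔ ∀ i : Fin k, r (i.castSucc) i.succ := by
    exact ⟨fun h => this.1 (fun i j hij => h i j hij), fun h i j hij => this.2 h hij⟩
  rw [e]
  refine forall_congr' fun i => ?_
  simp only [r]
  refine or_congr Iff.rfl (and_congr_right fun _ => ?_)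
  have h1 : oneLine (k + 1) π (i + 1) = (π i.castSucc : ℕ) + 1 := by
    simpa using oneLine_succ (k + 1) π i.castSucc
  have h2 : oneLine (k + 1) π (i + 1 + 1) = (π i.succ : ℕ) + 1 := by
    simpa using oneLine_succ (k + 1) π i.succ
  have hne : π i.castSucc ≠ π i.succ := by
    intro h; have := π.injective h
    exact absurd this (Fin.castSucc_lt_succ (i := i)).ne
  have hne' : (π i.castSucc : ℕ) ≠ (π i.succ : ℕ) := fun h => hne (Fin.ext h)
  unfold upS
  rw [h1, h2]
  simp only [Fin.lt_def]
  split_ifs <;> simp_all <;> omega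

lemma vcount_eq (pos : ℕ → Prop) (k m : ℕ) (π : Equiv.Perm (Fin (k + 1))) (ok : ℕ → ℕ → Prop)
    (h0 : ¬ ok 0 0)
    (hok : ∀ i j, ok (i + 1) (j + 1) ↔ if upS (k + 1) π (i + 1) then pos j else ¬ pos j) :
    vcount pos (k + 1) m π = ∑ j ∈ Finset.range (m + 1), cntS ok (k + 1) j := by
  rw [← card_all ok h0]
  unfold vcount
  congr 1
  ext f
  simp only [Finset.mem_filter, Finset.mem_univ, true_and]
  rw [valid_iff]
  simp only [hok]


section
open PowerSeries

def GS (ok : ℕ → ℕ → Prop) (k : ℕ) : PowerSeries ℚ := mk fun j => (cntS ok k j : ℚ)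
def OS (ok : ℕ → ℕ → Prop) (k : ℕ) : PowerSeries ℚ := mk fun j => if ok k j then (cntS ok k j : ℚ) else 0

lemma one_sub_mul_partial (f g h : ℕ → ℚ) (H : ∀ j, f j = (∑ i ∈ Finset.range j, g i) + h j) :
    (1 - X) * mk f = X * mk g + (1 - X) * (mk h : PowerSeries ℚ) := by
  ext j
  rw [sub_mul, sub_mul, one_mul, one_mul]
  cases j with
  | zero => simp [H]
  | succ j =>
    simp only [map_sub, map_add, coeff_succ_X_mul, coeff_mk, H, Finset.sum_range_succ]
    ring

lemma GS_zero (ok : ℕ → ℕ → Prop) : GS ok 0 = 1 := by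
  ext j; simp [GS, cntS, coeff_one]

lemma GS_succ (ok : ℕ → ℕ → Prop) (k : ℕ) :
    (1 - X) * GS ok (k + 1) = X * GS ok k + (1 - X) * OS ok k := by
  apply one_sub_mul_partial
  intro j
  rw [cntS]; push_cast; simp

lemma sum_gf (g : ℕ → ℚ) :
    (1 - X) * (mk fun m => ∑ j ∈ Finset.range (m + 1), g j) = (mk g : PowerSeries ℚ) := by
  rw [one_sub_mul_partial _ g g (fun j => by rw [Finset.sum_range_succ])]
  ring

/-- number of k' in 1..k with a strict step -/
lemma GS_unsigned (up : ℕ → Prop) (ok : ℕ → ℕ → Prop) (hok : ∀ k j, ok k j ↔ (up k ∧ 1 ≤ k))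
    (k : ℕ) : (1 - X) ^ (k + 1) * GS ok (k + 1)
      = X ^ (((Finset.Icc 1 k).filter fun i => ¬ up i).card + 1) := by
  induction k with
  | zero =>
    have : OS ok 0 = 0 := by ext j; simp [OS, hok]
    simp [GS_succ, GS_zero, this]
  | succ k ih =>
    rw [pow_succ, mul_assoc, GS_succ]
    have hI : Finset.Icc 1 (k + 1) = insert (k + 1) (Finset.Icc 1 k) := by
      ext i; simp; omega
    rw [hI, Finset.filter_insert]
    by_cases h : up (k + 1)
    · have : OS ok (k + 1) = GS ok (k + 1) := by ext j; simp [OS, GS, hok, h]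
      rw [this, if_neg (by simpa using h), ← ih]; ring
    · have : OS ok (k + 1) = 0 := by ext j; simp [OS, hok, h]
      rw [this, if_pos h, Finset.card_insert_of_notMem (by simp), pow_succ X, ← ih]; ring

lemma sort_card (n m : ℕ) :
    ∑ π : Equiv.Perm (Fin n), vcount (fun _ => True) n m π = m ^ n := by
  have : m ^ n = (Finset.univ : Finset (Fin n → Fin m)).card := by simp
  rw [this]
  unfold vcount
  rw [← Finset.card_sigma]
  refine Finset.card_bij' (fun p _ => p.2 ∘ p.1.symm) (fun w _ => ⟨Tuple.sort w, w ∘ Tuple.sort w⟩)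
    (by simp) ?_ ?_ ?_
  · intro w _
    simp only [Finset.mem_sigma, Finset.mem_univ, Finset.mem_filter, true_and]
    obtain ⟨h1, h2⟩ := (Tuple.eq_sort_iff (f := w) (σ := Tuple.sort w)).1 rfl
    intro i j hij
    rcases (h1 hij.le).lt_or_eq with h | h
    · exact Or.inl h
    · exact Or.inr ⟨h, by simpa using h2 i j hij h⟩
  · rintro ⟨σ, f⟩ hf
    simp only [Finset.mem_sigma, Finset.mem_univ, Finset.mem_filter, true_and] at hf
    have : σ = Tuple.sort (f ∘ σ.symm) := by
      rw [Tuple.eq_sort_iff]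
      constructor
      · intro i j hij
        rcases hij.lt_or_eq with h | h
        · rcases hf i j h with h | h
          · simpa using h.le
          · simpa using h.1.le
        · rw [h]
      · intro i j hij h
        rcases hf i j hij with h' | h'
        · simp at h; exact absurd h h'.ne
        · simpa using h'.2
    simp only
    rw [← this]
    congr 1
    funext i; simp
  · intro w _
    funext i; simp

lemma des_eq (k : ℕ) (π : Equiv.Perm (Fin (k + 1))) :
    des (k + 1) π = ((Finset.Icc 1 k).filter fun i => ¬ upS (k + 1) π i).card := by
  unfold des
  simp only [Nat.add_sub_cancel]
  congr 1
  apply Finset.filter_congr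
  intro i hi
  rw [Finset.mem_Icc] at hi
  obtain ⟨i, rfl⟩ : ∃ i', i = i' + 1 := ⟨i - 1, by omega⟩
  unfold upS
  have h1 := oneLine_succ (k + 1) π ⟨i, by omega⟩
  have h2 := oneLine_succ (k + 1) π ⟨i + 1, by omega⟩
  simp only at h1 h2
  rw [h1, h2]
  have : (π ⟨i, by omega⟩ : ℕ) ≠ π ⟨i + 1, by omega⟩ := by
    intro h
    have := π.injective (Fin.ext h)
    simp at this
  omega

lemma euler_gf (n : ℕ) (hn : 1 ≤ n) :
    ((eulerianA n : Polynomial ℚ) : PowerSeries ℚ) = (1 - X) ^ (n + 1) * mk fun k => (k : ℚ) ^ n := by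
  obtain ⟨k, rfl⟩ : ∃ k, n = k + 1 := ⟨n - 1, by omega⟩
  have e : (mk fun m => (m : ℚ) ^ (k + 1) : PowerSeries ℚ)
     = ∑ π : Equiv.Perm (Fin (k + 1)), mk fun m => (vcount (fun _ => True) (k + 1) m π : ℚ) := by
    ext m
    simp only [coeff_mk, map_sum]
    rw [← Nat.cast_pow, ← sort_card]; simp
  rw [e, Finset.mul_sum, eulerianA]
  rw [← Polynomial.coeToPowerSeries.ringHom_apply, map_sum]
  refine Finset.sum_congr rfl fun π _ => ?_
  have e2 : (mk fun m => (vcount (fun _ => True) (k + 1) m π : ℚ) : PowerSeries ℚ)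
     = mk fun m => ∑ j ∈ Finset.range (m + 1),
        (cntS (fun i _ => upS (k + 1) π i ∧ 1 ≤ i) (k + 1) j : ℚ) := by
    ext m
    simp only [coeff_mk]
    rw [vcount_eq _ k m π (fun i _ => upS (k + 1) π i ∧ 1 ≤ i) (by simp)
      (by intro i j; simp)]
    push_cast; rfl
  rw [e2, pow_succ (1 - X : PowerSeries ℚ), mul_assoc, sum_gf]
  rw [des_eq]
  have := GS_unsigned (upS (k + 1) π) (fun i _ => upS (k + 1) π i ∧ 1 ≤ i) (by simp) k
  rw [GS] at this
  rw [this]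
  simp

end


section
open PowerSeries

def chg (up : ℕ → Prop) (k : ℕ) : ℕ := ((Finset.Icc 1 k).filter fun i => ¬ (up (i - 1) ↔ up i)).card

lemma chg_succ (up : ℕ → Prop) (k : ℕ) :
    chg up (k + 1) = chg up k + if (up k ↔ up (k + 1)) then 0 else 1 := by
  unfold chg
  have hI : Finset.Icc 1 (k + 1) = insert (k + 1) (Finset.Icc 1 k) := by
    ext i; simp; omega
  rw [hI, Finset.filter_insert]
  simp only [Nat.add_sub_cancel]
  by_cases h : up k ↔ up (k + 1)
  · simp [h]
  · rw [if_pos h, if_neg h, Finset.card_insert_of_notMem (by simp)]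

lemma chg_le (up : ℕ → Prop) (k : ℕ) : chg up k ≤ k := by
  unfold chg
  refine (Finset.card_filter_le _ _).trans (by simp)

lemma chg_even (up : ℕ → Prop) (h0 : up 0) (k : ℕ) : up k ↔ Even (chg up k) := by
  induction k with
  | zero => simp [chg, h0]
  | succ k ih =>
    rw [chg_succ]
    by_cases h : up k ↔ up (k + 1)
    · rw [if_pos h, add_zero, ← ih, h]
    · rw [if_neg h, Nat.even_add_one, ← ih]; tauto

lemma OS_up (up : ℕ → Prop) (ok : ℕ → ℕ → Prop)
    (hok : ∀ k j, ok k j ↔ if up k then Odd j else Even j) (k : ℕ) :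
    2 * OS ok k = if up k then GS ok k - evalNegHom (GS ok k) else GS ok k + evalNegHom (GS ok k) := by
  have h2 : (2 : PowerSeries ℚ) = C (2 : ℚ) := (map_ofNat (C (R := ℚ)) 2).symm
  split_ifs with h <;> ext j <;> rw [h2, coeff_C_mul] <;>
    simp only [OS, GS, hok, h, if_true, if_false, evalNegHom, map_sub, map_add, coeff_rescale,
      coeff_mk]
  · rcases Nat.even_or_odd j with hj | hj
    · simp [hj.neg_one_pow, hj]
    · simp [hj.neg_one_pow, hj]; ring
  · rcases Nat.even_or_odd j with hj | hj
    · simp [hj.neg_one_pow, hj]; ring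
    · simp [hj.neg_one_pow, hj]

lemma GS_signed (up : ℕ → Prop) (h0 : up 0) (ok : ℕ → ℕ → Prop)
    (hok : ∀ k j, ok k j ↔ if up k then Odd j else Even j) (k : ℕ) :
    (1 - X ^ 2) ^ (k + 1) * GS ok (k + 1)
      = (1 + X) * (X * (2 * X) ^ (chg up k) * (1 + X ^ 2) ^ (k - chg up k)) := by
  have two_ne : (2 : PowerSeries ℚ) ≠ 0 := by
    intro h; have := congrArg (coeff 0) h
    rw [show (2 : PowerSeries ℚ) = C (2 : ℚ) from (map_ofNat (C (R := ℚ)) 2).symm] at this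
    simp at this
  induction k with
  | zero =>
    have h1 := GS_succ ok 0
    have h2 := OS_up up ok hok 0
    rw [GS_zero, if_pos h0, map_one, sub_self] at h2
    have h3 : OS ok 0 = 0 := (mul_eq_zero.1 h2).resolve_left two_ne
    rw [h3, GS_zero] at h1
    simp only [chg, zero_add, pow_one]
    simp
    linear_combination (1 + X) * h1
  | succ k ih =>
    have h1 := GS_succ ok (k + 1)
    have h2 := OS_up up ok hok (k + 1)
    have hN := congrArg evalNegHom ih
    have he := chg_even up h0 k
    have hl := chg_le up k
    simp only [map_mul, map_pow, map_sub, map_add, map_one, evalNegHom_X, map_ofNat] at hN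
    rw [chg_succ]
    set c := chg up k
    set G := GS ok (k + 1)
    set N := evalNegHom G
    set W := (1 + X ^ 2 : PowerSeries ℚ) ^ (k - c) with hW
    apply mul_left_cancel₀ two_ne
    have hx : ((-X) ^ 2 : PowerSeries ℚ) = X ^ 2 := by ring
    rw [hx] at hN
    rw [show (2 * -X : PowerSeries ℚ) = - (2 * X) by ring, neg_pow (2 * X : PowerSeries ℚ)] at hN
    by_cases hk : up k
    · rw [(he.1 hk).neg_one_pow] at hN
      by_cases hk1 : up (k + 1)
      · rw [if_pos hk1] at h2
        rw [if_pos (by tauto), add_zero, show k + 1 - c = (k - c) + 1 by omega,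
          pow_succ (1 + X ^ 2 : PowerSeries ℚ), ← hW, pow_succ (1 - X ^ 2 : PowerSeries ℚ)]
        linear_combination 2 * (1 - X ^ 2) ^ (k + 1) * (1 + X) * h1
          + (1 - X ^ 2) ^ (k + 1) * (1 + X) * (1 - X) * h2
          + (2 * X * (1 + X) + (1 + X) * (1 - X)) * ih - (1 + X) * (1 - X) * hN
      · rw [if_neg hk1] at h2
        rw [if_neg (by tauto), show k + 1 - (c + 1) = (k - c) by omega,
          pow_succ (2 * X : PowerSeries ℚ), ← hW, pow_succ (1 - X ^ 2 : PowerSeries ℚ)]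
        linear_combination 2 * (1 - X ^ 2) ^ (k + 1) * (1 + X) * h1
          + (1 - X ^ 2) ^ (k + 1) * (1 + X) * (1 - X) * h2
          + (2 * X * (1 + X) + (1 + X) * (1 - X)) * ih + (1 + X) * (1 - X) * hN
    · rw [(Nat.not_even_iff_odd.1 (fun h => hk (he.2 h))).neg_one_pow] at hN
      by_cases hk1 : up (k + 1)
      · rw [if_pos hk1] at h2
        rw [if_neg (by tauto), show k + 1 - (c + 1) = (k - c) by omega,
          pow_succ (2 * X : PowerSeries ℚ), ← hW, pow_succ (1 - X ^ 2 : PowerSeries ℚ)]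
        linear_combination 2 * (1 - X ^ 2) ^ (k + 1) * (1 + X) * h1
          + (1 - X ^ 2) ^ (k + 1) * (1 + X) * (1 - X) * h2
          + (2 * X * (1 + X) + (1 + X) * (1 - X)) * ih - (1 + X) * (1 - X) * hN
      · rw [if_neg hk1] at h2
        rw [if_pos (by tauto), add_zero, show k + 1 - c = (k - c) + 1 by omega,
          pow_succ (1 + X ^ 2 : PowerSeries ℚ), ← hW, pow_succ (1 - X ^ 2 : PowerSeries ℚ)]
        linear_combination 2 * (1 - X ^ 2) ^ (k + 1) * (1 + X) * h1
          + (1 - X ^ 2) ^ (k + 1) * (1 + X) * (1 - X) * h2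
          + (2 * X * (1 + X) + (1 + X) * (1 - X)) * ih + (1 + X) * (1 - X) * hN

lemma upS_zero (k : ℕ) (π : Equiv.Perm (Fin (k + 1))) : upS (k + 1) π 0 := by
  have h1 := oneLine_succ (k + 1) π 0
  simp only [Fin.val_zero, zero_add] at h1
  unfold upS
  rw [zero_add, h1]
  simp [oneLine]

lemma udr_eq (k : ℕ) (π : Equiv.Perm (Fin (k + 1))) :
    udr (k + 1) π = chg (upS (k + 1) π) k + 1 := by
  unfold udr lpk pval chg
  simp only [Nat.add_sub_cancel]
  congr 1
  have e : (Finset.Icc 2 k).filter (fun i => oneLine (k + 1) π i < oneLine (k + 1) π (i - 1) ∧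
      oneLine (k + 1) π i < oneLine (k + 1) π (i + 1))
     = (Finset.Icc 1 k).filter (fun i => oneLine (k + 1) π i < oneLine (k + 1) π (i - 1) ∧
      oneLine (k + 1) π i < oneLine (k + 1) π (i + 1)) := by
    ext i
    simp only [Finset.mem_filter, Finset.mem_Icc]
    constructor
    · rintro ⟨h, h'⟩; exact ⟨by omega, h'⟩
    · rintro ⟨h, h'⟩
      refine ⟨?_, h'⟩
      by_contra hc
      obtain rfl : i = 1 := by omega
      have := h'.1
      simp [oneLine] at this
  rw [e, ← Finset.card_union_of_disjoint]
  · rw [← Finset.filter_or]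
    congr 1
    apply Finset.filter_congr
    intro i hi
    rw [Finset.mem_Icc] at hi
    have hne : ∀ j, j ≤ k → oneLine (k + 1) π j ≠ oneLine (k + 1) π (j + 1) := by
      intro j hj
      have h2 := oneLine_succ (k + 1) π ⟨j, by omega⟩
      simp only at h2
      rw [h2]
      rcases Nat.eq_zero_or_pos j with rfl | hj0
      · simp [oneLine]
      · obtain ⟨j, rfl⟩ : ∃ i', j = i' + 1 := ⟨j - 1, by omega⟩
        have h1 := oneLine_succ (k + 1) π ⟨j, by omega⟩
        simp only at h1
        rw [h1]
        intro h
        have : (π ⟨j, by omega⟩ : ℕ) = π ⟨j + 1, by omega⟩ := by omega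
        have := π.injective (Fin.ext this)
        simp at this
    have h1 := hne i hi.2
    have h2 := hne (i - 1) (by omega)
    unfold upS
    rw [show i - 1 + 1 = i by omega] at *
    omega
  · rw [Finset.disjoint_filter]
    rintro i - h1 h2
    omega

lemma udr_le (n : ℕ) (hn : 1 ≤ n) (π : Equiv.Perm (Fin n)) : udr n π ≤ n := by
  obtain ⟨k, rfl⟩ : ∃ k, n = k + 1 := ⟨n - 1, by omega⟩
  rw [udr_eq]
  have := chg_le (upS (k + 1) π) k
  omega

lemma udr_gf (n : ℕ) (hn : 1 ≤ n) (π : Equiv.Perm (Fin n)) :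
    (1 + X) ^ 2 * (2 ^ udr n π * X ^ udr n π * (1 + X ^ 2) ^ (n - udr n π) : PowerSeries ℚ)
      = 2 * (1 - X ^ 2) ^ (n + 1) * mk fun m => (vcount Even n m π : ℚ) := by
  obtain ⟨k, rfl⟩ : ∃ k, n = k + 1 := ⟨n - 1, by omega⟩
  have hok : ∀ i j : ℕ, (fun (i j : ℕ) => if upS (k + 1) π i then Odd j else Even j) i j ↔
    if upS (k + 1) π i then Odd j else Even j := fun i j => Iff.rfl
  have e2 : (mk fun m => (vcount Even (k + 1) m π : ℚ) : PowerSeries ℚ)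
     = mk fun m => ∑ j ∈ Finset.range (m + 1),
        (cntS (fun (i j : ℕ) => if upS (k + 1) π i then Odd j else Even j) (k + 1) j : ℚ) := by
    ext m
    simp only [coeff_mk]
    rw [vcount_eq _ k m π (fun (i j : ℕ) => if upS (k + 1) π i then Odd j else Even j)
      (by simp [upS_zero])
      (by intro i j; split_ifs <;> simp [Nat.odd_add_one, Nat.even_add_one])]
    push_cast; rfl
  have h1 := GS_signed (upS (k + 1) π) (upS_zero k π) _ hok k
  have h2 := sum_gf (fun j => (cntS (fun (i j : ℕ) => if upS (k + 1) π i then Odd j else Even j) (k + 1) j : ℚ))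
  rw [← GS] at h2
  rw [← h2, ← e2] at h1
  rw [udr_eq, show k + 1 - (chg (upS (k + 1) π) k + 1) = k - (chg (upS (k + 1) π) k) by omega,
    pow_succ (1 - X ^ 2 : PowerSeries ℚ) (k + 1)]
  rw [mul_pow] at h1
  linear_combination (-2) * (1 + X) * h1

end


def CompatO (pos : ℕ → Prop) {n m : ℕ} (φ : ZMod n ≃ Fin n) (x : ZMod n → Fin m) : Prop :=
  ∀ a b, φ a < φ b → x a < x b ∨
    (x a = x b ∧ if pos (x a) then φ (a + 1) < φ (b + 1) else φ (b + 1) < φ (a + 1))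

def DisO {n : ℕ} (φ ψ : ZMod n ≃ Fin n) (a b : ZMod n) : Prop :=
  (φ a < φ b ∧ ψ b < ψ a) ∨ (φ b < φ a ∧ ψ a < ψ b)

def PerO {n m : ℕ} (x : ZMod n → Fin m) (h : ZMod n) : Prop := ∀ a, x (a + h) = x a

lemma dis_step {pos : ℕ → Prop} {n m : ℕ} {φ ψ : ZMod n ≃ Fin n} {x : ZMod n → Fin m}
    (hφ : CompatO pos φ x) (hψ : CompatO pos ψ x) {a b : ZMod n} (h : DisO φ ψ a b) :
    x a = x b ∧ DisO φ ψ (a + 1) (b + 1) := by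
  rcases h with ⟨h1, h2⟩ | ⟨h1, h2⟩
  · have k1 := hφ _ _ h1
    have k2 := hψ _ _ h2
    rcases k1 with k1 | ⟨k1, k1'⟩
    · rcases k2 with k2 | ⟨k2, _⟩
      · exact absurd k1 k2.asymm
      · exact absurd k2.symm k1.ne
    · refine ⟨k1, ?_⟩
      rcases k2 with k2 | ⟨k2, k2'⟩
      · exact absurd k1.symm k2.ne
      · rw [k1] at k1'
        unfold DisO
        split_ifs at * <;> tauto
  · have k1 := hφ _ _ h1
    have k2 := hψ _ _ h2
    rcases k1 with k1 | ⟨k1, k1'⟩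
    · rcases k2 with k2 | ⟨k2, _⟩
      · exact absurd k1 k2.asymm
      · exact absurd k2.symm k1.ne
    · refine ⟨k1.symm, ?_⟩
      rcases k2 with k2 | ⟨k2, k2'⟩
      · exact absurd k1.symm k2.ne
      · rw [k1] at k1'
        unfold DisO
        split_ifs at * <;> tauto

lemma dis_iter {pos : ℕ → Prop} {n m : ℕ} {φ ψ : ZMod n ≃ Fin n} {x : ZMod n → Fin m}
    (hφ : CompatO pos φ x) (hψ : CompatO pos ψ x) {a b : ZMod n} (h : DisO φ ψ a b) (k : ℕ) :
    DisO φ ψ (a + k) (b + k) := by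
  induction k with
  | zero => simpa using h
  | succ k ih =>
    have := (dis_step hφ hψ ih).2
    push_cast
    rwa [← add_assoc, ← add_assoc]

lemma dis_per {pos : ℕ → Prop} {n m : ℕ} [NeZero n] {φ ψ : ZMod n ≃ Fin n} {x : ZMod n → Fin m}
    (hφ : CompatO pos φ x) (hψ : CompatO pos ψ x) {a b : ZMod n} (h : DisO φ ψ a b) :
    PerO x (b - a) := by
  intro c
  have := (dis_step hφ hψ (dis_iter hφ hψ h (c - a).val)).1
  rw [ZMod.natCast_zmod_val] at this
  rw [show c + (b - a) = b + (c - a) by ring, ← this]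
  congr 1; ring

lemma dis_ne {n : ℕ} {φ ψ : ZMod n ≃ Fin n} {a b : ZMod n} (h : DisO φ ψ a b) : b - a ≠ 0 := by
  intro h0
  rw [sub_eq_zero.1 h0] at h
  rcases h with h | h <;> exact absurd h.1 (lt_irrefl _)

lemma eq_of_no_dis {n : ℕ} {φ ψ : ZMod n ≃ Fin n} (h : ∀ a b, ¬ DisO φ ψ a b) : φ = ψ := by
  have hmono : ∀ i j : Fin n, i < j → ψ (φ.symm i) < ψ (φ.symm j) := by
    intro i j hij
    by_contra hc
    have hne : ψ (φ.symm i) ≠ ψ (φ.symm j) := by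
      intro he
      exact hij.ne (φ.symm.injective (ψ.injective he))
    exact h (φ.symm i) (φ.symm j) (Or.inl ⟨by simpa using hij, lt_of_le_of_ne (not_lt.1 hc) hne.symm⟩)
  have hs : StrictMono (φ.symm.trans ψ) := fun i j hij => hmono i j hij
  have : hs.orderIsoOfSurjective _ (φ.symm.trans ψ).surjective = OrderIso.refl _ :=
    Subsingleton.elim _ _
  ext a
  have h2 := DFunLike.congr_fun this (φ a)
  simp at h2
  rw [h2]

def TR (pos : ℕ → Prop) {n m : ℕ} (x : ZMod n → Fin m) (r : ZMod n → ZMod n → Prop) :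
    ZMod n → ZMod n → Prop := fun a b =>
  x a < x b ∨ (x a = x b ∧ if pos (x a) then r (a + 1) (b + 1) else r (b + 1) (a + 1))

def STO {α : Type*} (r : α → α → Prop) : Prop :=
  (∀ a, ¬ r a a) ∧ (∀ a b c, r a b → r b c → r a c) ∧ (∀ a b, a ≠ b → r a b ∨ r b a)

lemma TR_sto (pos : ℕ → Prop) {n m : ℕ} (x : ZMod n → Fin m) (r : ZMod n → ZMod n → Prop)
    (h : STO r) : STO (TR pos x r) := by
  obtain ⟨h1, h2, h3⟩ := h
  refine ⟨?_, ?_, ?_⟩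
  · intro a ha
    rcases ha with ha | ⟨_, ha⟩
    · exact lt_irrefl _ ha
    · simp only [ite_self] at ha
      exact h1 _ ha
  · intro a b c hab hbc
    rcases hab with k1 | ⟨k1, k1'⟩ <;> rcases hbc with k2 | ⟨k2, k2'⟩
    · exact Or.inl (k1.trans k2)
    · exact Or.inl (k2 ▸ k1)
    · exact Or.inl (k1 ▸ k2)
    · refine Or.inr ⟨k1.trans k2, ?_⟩
      rw [k1] at k1' ⊢
      split_ifs at * with h
      · exact h2 _ _ _ k1' k2'
      · exact h2 _ _ _ k2' k1'
  · intro a b hab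
    have hab' : a + 1 ≠ b + 1 := fun h => hab (add_right_cancel h)
    have := h3 _ _ hab'
    unfold TR
    rcases lt_trichotomy (x a) (x b) with h | h | h
    · tauto
    · rw [h]
      split_ifs <;> tauto
    · tauto

lemma exists_phi {n : ℕ} [NeZero n] (r : ZMod n → ZMod n → Prop) (h : STO r) :
    ∃ φ : ZMod n ≃ Fin n, ∀ a b, φ a < φ b ↔ r a b := by
  obtain ⟨h1, h2, h3⟩ := h
  have hf : ∀ a : ZMod n, (Finset.univ.filter fun b => r b a).card < n := by
    intro a
    have : (Finset.univ.filter fun b => r b a) ⊂ (Finset.univ : Finset (ZMod n)) := by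
      rw [Finset.filter_ssubset]; exact ⟨a, Finset.mem_univ _, h1 a⟩
    simpa [ZMod.card] using Finset.card_lt_card this
  let f : ZMod n → Fin n := fun a => ⟨_, hf a⟩
  have hlt : ∀ a b, r a b → f a < f b := by
    intro a b hab
    rw [Fin.lt_def]
    apply Finset.card_lt_card
    rw [Finset.ssubset_iff_of_subset]
    · exact ⟨a, by simpa using hab, by simpa using h1 a⟩
    · intro c hc
      simp only [Finset.mem_filter, Finset.mem_univ, true_and] at hc ⊢
      exact h2 _ _ _ hc hab
  have hinj : Function.Injective f := by
    intro a b hab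
    by_contra hne
    rcases h3 a b hne with h | h
    · exact (hlt _ _ h).ne hab
    · exact (hlt _ _ h).ne hab.symm
  have hbij : Function.Bijective f :=
    (Fintype.bijective_iff_injective_and_card f).2 ⟨hinj, by simp [ZMod.card]⟩
  refine ⟨Equiv.ofBijective f hbij, fun a b => ⟨fun hab => ?_, hlt a b⟩⟩
  by_contra hc
  have hab' : f a < f b := hab
  by_cases he : a = b
  · rw [he] at hab'; exact lt_irrefl _ hab'
  · rcases h3 a b he with h | h
    · exact hc h
    · exact absurd (hlt _ _ h) hab'.asymm

lemma exists_compat (pos : ℕ → Prop) {n m : ℕ} [NeZero n] (x : ZMod n → Fin m)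
    (r0 : ZMod n → ZMod n → Prop) (hr : STO r0)
    (hc : ∀ a b, PerO x (b - a) → (TR pos x r0 a b ↔ r0 a b)) :
    ∃ φ : ZMod n ≃ Fin n, CompatO pos φ x := by
  let T := TR pos x
  let s : ℕ → ZMod n → ZMod n → Prop := fun i => T^[i] r0
  have hs : ∀ i, s (i + 1) = T (s i) := fun i => Function.iterate_succ_apply' T i r0
  have hsab : ∀ i a b, s (i + 1) a b ↔ (x a < x b ∨ (x a = x b ∧
      if pos (x a) then s i (a + 1) (b + 1) else s i (b + 1) (a + 1))) := by
    intro i a b; rw [hs]; rfl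
  have hsto : ∀ i, STO (s i) := by
    intro i
    induction i with
    | zero => exact hr
    | succ i ih => rw [hs]; exact TR_sto _ _ _ ih
  have hag : ∀ i a b, PerO x (b - a) → (s (i + 1) a b ↔ s i a b) := by
    intro i
    induction i with
    | zero => intro a b h; exact hc a b h
    | succ i ih =>
      intro a b h
      have h1 := ih (a + 1) (b + 1) (by simpa using h)
      have h2 : PerO x (a - b) := by
        intro c
        rw [← h (c + (a - b))]; congr 1; ring
      have h3 := ih (b + 1) (a + 1) (by simpa using h2)
      rw [hsab (i + 1) a b, hsab i a b, h1, h3]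
  have hdis : ∀ i a b, (¬ (s (i + 2) a b ↔ s (i + 1) a b)) → x a = x b ∧
      ((¬ (s (i + 1) (a + 1) (b + 1) ↔ s i (a + 1) (b + 1))) ∨
       (¬ (s (i + 1) (b + 1) (a + 1) ↔ s i (b + 1) (a + 1)))) := by
    intro i a b h
    rw [hsab (i + 1) a b, hsab i a b] at h
    by_cases hx : x a = x b
    · refine ⟨hx, ?_⟩
      by_contra hcon
      rw [not_or, not_not, not_not] at hcon
      apply h
      rw [hcon.1, hcon.2]
    · exact absurd (by simp [hx]) h
  have hdis' : ∀ k i a b, (¬ (s (i + k + 1) a b ↔ s (i + k) a b)) →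
      ((¬ (s (i + 1) (a + k) (b + k) ↔ s i (a + k) (b + k))) ∨
       (¬ (s (i + 1) (b + k) (a + k) ↔ s i (b + k) (a + k)))) ∧ ∀ j < k, x (a + j) = x (b + j) := by
    intro k
    induction k with
    | zero => intro i a b h; simpa using Or.inl h
    | succ k ih =>
      intro i a b h
      obtain ⟨h1, h2⟩ := hdis (i + k) a b h
      have key : ((¬ (s (i + 1) (a + 1 + k) (b + 1 + k) ↔ s i (a + 1 + k) (b + 1 + k))) ∨
       (¬ (s (i + 1) (b + 1 + k) (a + 1 + k) ↔ s i (b + 1 + k) (a + 1 + k)))) ∧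
         ∀ j < k, x (a + 1 + j) = x (b + 1 + j) := by
        rcases h2 with h2 | h2
        · exact ih i _ _ h2
        · obtain ⟨h3, h4⟩ := ih i _ _ h2
          exact ⟨h3.symm, fun j hj => (h4 j hj).symm⟩
      push_cast
      simp only [add_assoc, add_comm (1 : ZMod n)] at key ⊢
      refine ⟨key.1, fun j hj => ?_⟩
      cases j with
      | zero => simpa using h1
      | succ j => push_cast; exact key.2 j (by omega)
  -- eventually periodic
  obtain ⟨i, j, hij, hsij⟩ : ∃ i j, i < j ∧ s i = s j := by
    obtain ⟨i, j, hne, h⟩ := Finite.exists_ne_map_eq_of_infinite s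
    rcases lt_or_gt_of_ne hne with h' | h'
    · exact ⟨i, j, h', h⟩
    · exact ⟨j, i, h', h.symm⟩
  obtain ⟨q, rfl⟩ : ∃ q, j = i + q := ⟨j - i, by omega⟩
  have hper : ∀ N, s (i + q * N) = s i := by
    intro N
    induction N with
    | zero => rfl
    | succ N ih =>
      have : s (i + q * (N + 1)) = T^[q] (s (i + q * N)) := by
        simp only [s]
        rw [← Function.iterate_add_apply]; congr 1; ring
      rw [this, ih]
      simp only [s]
      rw [← Function.iterate_add_apply]
      rw [add_comm q i]; exact hsij.symm
  have hfix : ∀ a b, s (i + 1) a b ↔ s i a b := by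
    intro a b
    by_contra hcon
    have hq : 0 < q := by omega
    have h1 : s (i + q * n + 1) = s (i + 1) := by rw [hs, hs, hper]
    have h2 : ¬ (s (i + q * n + 1) a b ↔ s (i + q * n) a b) := by rw [h1, hper]; exact hcon
    have h3 := (hdis' (q * n) i a b h2).2
    apply hcon
    apply hag
    intro c
    have hv : (c - a).val < q * n :=
      lt_of_lt_of_le (ZMod.val_lt _) (Nat.le_mul_of_pos_left _ hq)
    have := h3 _ hv
    rw [ZMod.natCast_zmod_val] at this
    rw [show c + (b - a) = b + (c - a) by ring, ← this]
    congr 1; ring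
  obtain ⟨φ, hφ⟩ := exists_phi (s i) (hsto i)
  refine ⟨φ, fun a b hab => ?_⟩
  rw [hφ, ← hfix, hs] at hab
  simp only [hφ]
  exact hab

def negc (pos : ℕ → Prop) {m : ℕ} (y : ℕ → Fin m) (k : ℕ) : ℕ :=
  ((Finset.range k).filter fun i => ¬ pos (y i)).card

lemma negc_succ (pos : ℕ → Prop) {m : ℕ} (y : ℕ → Fin m) (k : ℕ) :
    negc pos y (k + 1) = negc pos y k + if pos (y k) then 0 else 1 := by
  unfold negc
  rw [Finset.range_add_one, Finset.filter_insert]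
  by_cases h : pos (y k)
  · simp [h]
  · simp [h]

lemma negc_add (pos : ℕ → Prop) {m : ℕ} (y : ℕ → Fin m) (p : ℕ) (hp : ∀ i, y (i + p) = y i) (k : ℕ) :
    negc pos y (k + p) = negc pos y k + negc pos y p := by
  induction k with
  | zero => simp [negc]
  | succ k ih =>
    rw [show k + 1 + p = (k + p) + 1 by ring, negc_succ, ih, negc_succ, hp]; ring

lemma negc_mul (pos : ℕ → Prop) {m : ℕ} (y : ℕ → Fin m) (p : ℕ) (hp : ∀ i, y (i + p) = y i) (k : ℕ) :
    negc pos y (k * p) = k * negc pos y p := by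
  induction k with
  | zero => simp [negc]
  | succ k ih => rw [add_mul, one_mul, negc_add pos y p hp, ih]; ring


def shiftS {m : ℕ} (y : ℕ → Fin m) : ℕ → Fin m := fun k => y (k + 1)

lemma shiftS_iter {m : ℕ} (y : ℕ → Fin m) (j : ℕ) : shiftS^[j] y = fun k => y (k + j) := by
  induction j with
  | zero => rfl
  | succ j ih =>
    rw [Function.iterate_succ_apply', ih]; funext k; simp only [shiftS]; congr 1; ring

lemma per_iff {m : ℕ} (y : ℕ → Fin m) (j : ℕ) :
    Function.IsPeriodicPt shiftS j y ↔ ∀ k, y (k + j) = y k := by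
  unfold Function.IsPeriodicPt Function.IsFixedPt
  rw [shiftS_iter]
  exact funext_iff

def seqO {n m : ℕ} (x : ZMod n → Fin m) : ℕ → Fin m := fun k => x k

lemma seqO_per_iff {n m : ℕ} [NeZero n] (x : ZMod n → Fin m) (h : ℕ) :
    Function.IsPeriodicPt shiftS h (seqO x) ↔ PerO x (h : ZMod n) := by
  rw [per_iff]
  constructor
  · intro H a
    have := H a.val
    simpa [seqO] using this
  · intro H k
    simpa [seqO] using H k

lemma compat_cmp {pos : ℕ → Prop} {n m : ℕ} [NeZero n] {φ : ZMod n ≃ Fin n} {x : ZMod n → Fin m}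
    (hφ : CompatO pos φ x) (h : ZMod n) (hp : PerO x h) (h0 : h ≠ 0) (k : ℕ) :
    φ (k : ZMod n) < φ (k + h) ↔ (φ 0 < φ h ↔ Even (negc pos (seqO x) k)) := by
  induction k with
  | zero => simp [negc]
  | succ k ih =>
    rw [negc_succ]
    have hne : φ ((k : ZMod n) + 1) ≠ φ (k + h + 1) := by
      intro he
      have := φ.injective he
      apply h0
      linear_combination -this
    have step : φ ((k : ZMod n) + 1) < φ (k + h + 1) ↔ (φ (k : ZMod n) < φ (k + h) ↔ pos (x k)) := by
      have hx : x (k + h) = x k := hp k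
      have hne2 : φ (k : ZMod n) ≠ φ (k + h) := by
        intro he
        have := φ.injective he
        apply h0
        linear_combination -this
      rcases lt_or_gt_of_ne hne2 with hlt | hlt
      · have := hφ _ _ hlt
        rw [hx] at this
        simp only [lt_irrefl, false_or, true_and] at this
        split_ifs at this with hpos
        · simp [hlt, this, hpos]
        · simp [hlt, this.le, hpos]
      · have := hφ _ _ hlt
        rw [hx] at this
        simp only [lt_irrefl, false_or, true_and] at this
        split_ifs at this with hpos
        · exact iff_of_false this.asymm (by simp [hlt.asymm, hpos])
        · exact iff_of_true this (by simp [hlt.asymm, hpos])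
    push_cast
    rw [show (k : ZMod n) + 1 + h = k + h + 1 by ring, step, ih]
    by_cases hpos : pos (x k)
    · simp [seqO, hpos]
    · simp only [seqO, hpos, if_false, Nat.even_add_one]
      tauto

lemma compat_odd {pos : ℕ → Prop} {n m : ℕ} [NeZero n] {φ : ZMod n ≃ Fin n} {x : ZMod n → Fin m}
    (hφ : CompatO pos φ x) (h : ℕ) (hp : PerO x (h : ZMod n)) (h0 : (h : ZMod n) ≠ 0) :
    Odd (negc pos (seqO x) h) := by
  by_contra hodd
  rw [Nat.not_odd_iff_even] at hodd
  have hper : ∀ i, seqO x (i + h) = seqO x i := (per_iff _ _).1 ((seqO_per_iff x h).2 hp)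
  have key : ∀ j : ℕ, φ ((j * h : ℕ) : ZMod n) < φ ((j * h : ℕ) + h) ↔ φ 0 < φ h := by
    intro j
    rw [compat_cmp hφ _ hp h0, negc_mul _ _ _ hper]
    have : Even (j * negc pos (seqO x) h) := hodd.mul_left j
    tauto
  have hne : ∀ j : ℕ, φ ((j * h : ℕ) : ZMod n) ≠ φ ((j * h : ℕ) + h) := by
    intro j he
    have := φ.injective he
    apply h0
    linear_combination -this
  have hn : 0 < n := Nat.pos_of_ne_zero (NeZero.ne n)
  by_cases hc : φ 0 < φ h
  · have hmono : StrictMono fun j : ℕ => φ ((j * h : ℕ) : ZMod n) := by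
      apply strictMono_nat_of_lt_succ
      intro j
      have := (key j).2 hc
      rw [add_mul, one_mul]; push_cast at this ⊢; exact this
    have := hmono hn
    simp at this
  · have hmono : StrictAnti fun j : ℕ => φ ((j * h : ℕ) : ZMod n) := by
      apply strictAnti_nat_of_succ_lt
      intro j
      have := lt_of_le_of_ne (not_lt.1 (fun h' => hc ((key j).1 h'))) (hne j).symm
      rw [add_mul, one_mul]; push_cast at this ⊢; exact this
    have := hmono hn
    simp at this

lemma compat_two {pos : ℕ → Prop} {n m : ℕ} [NeZero n] {φ : ZMod n ≃ Fin n} {x : ZMod n → Fin m}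
    (hφ : CompatO pos φ x) (h : ℕ) (hp : PerO x (h : ZMod n)) (h0 : (h : ZMod n) ≠ 0) :
    ((2 * h : ℕ) : ZMod n) = 0 := by
  by_contra h2
  have hper : ∀ i, seqO x (i + h) = seqO x i := (per_iff _ _).1 ((seqO_per_iff x h).2 hp)
  have hp2 : PerO x ((2 * h : ℕ) : ZMod n) := by
    intro a
    rw [← hp a, ← hp (a + h)]; congr 1; push_cast; ring
  have := compat_odd hφ _ hp2 h2
  rw [negc_mul _ _ _ hper] at this
  exact (Nat.not_odd_iff_even.2 (even_two_mul _)) this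

lemma card_A (pos : ℕ → Prop) {n m : ℕ} [NeZero n] (x : ZMod n → Fin m)
    (h : ∀ h, PerO x h → h = 0) :
    (Finset.univ.filter fun φ : ZMod n ≃ Fin n => CompatO pos φ x).card = 1 := by
  have hsto : STO (fun a b : ZMod n => a.val < b.val) := by
    refine ⟨fun a => lt_irrefl _, fun a b c => lt_trans, fun a b hab => ?_⟩
    exact lt_or_gt_of_ne fun he => hab (ZMod.val_injective n he)
  obtain ⟨φ, hφ⟩ := exists_compat pos x _ hsto (by
    intro a b hab
    have : a = b := (sub_eq_zero.1 (h _ hab)).symm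
    subst this
    have := (TR_sto pos x _ hsto).1 a
    exact iff_of_false this (hsto.1 a))
  rw [Finset.card_eq_one]
  refine ⟨φ, ?_⟩
  ext ψ
  simp only [Finset.mem_filter, Finset.mem_univ, true_and, Finset.mem_singleton]
  constructor
  · intro hψ
    apply eq_of_no_dis
    intro a b hab
    exact dis_ne hab (h _ (dis_per hψ hφ hab))
  · rintro rfl; exact hφ

lemma exists_B (pos : ℕ → Prop) {n m : ℕ} [NeZero n] (x : ZMod n → Fin m) (p : ℕ) (hp : n = 2 * p)
    (hper : PerO x (p : ZMod n)) (h : ∀ h, PerO x h → h = 0 ∨ h = p)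
    (hodd : Odd (negc pos (seqO x) p)) : ∃ φ : ZMod n ≃ Fin n, CompatO pos φ x := by
  have hp0 : 0 < p := by have := NeZero.ne n; omega
  have hseq : ∀ i, seqO x (i + p) = seqO x i := (per_iff _ _).1 ((seqO_per_iff x p).2 hper)
  have hadd := negc_add pos (seqO x) p hseq
  have hpar : ∀ k, Even (negc pos (seqO x) (k % n)) ↔ Even (negc pos (seqO x) k) := by
    intro k
    have hk : k = k % n + (2 * (k / n)) * p := by
      have h1 := Nat.mod_add_div k n
      have h2 : n * (k / n) = 2 * p * (k / n) := congrArg (fun z => z * (k / n)) hp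
      have h3 : 2 * p * (k / n) = (2 * (k / n)) * p := by ring
      omega
    have : ∀ j i, negc pos (seqO x) (i + j * p) = negc pos (seqO x) i + j * negc pos (seqO x) p := by
      intro j i
      induction j with
      | zero => simp
      | succ j ih => rw [add_mul, one_mul, ← add_assoc, hadd, ih]; ring
    have h4 := this (2 * (k / n)) (k % n)
    rw [← hk] at h4
    rw [h4, Nat.even_add]
    have : Even (2 * (k / n) * negc pos (seqO x) p) := by
      rw [mul_assoc]; exact even_two_mul _
    tauto
  let R : ZMod n → Prop := fun a => Even (negc pos (seqO x) a.val)
  have hRc : ∀ k : ℕ, R (k : ZMod n) ↔ Even (negc pos (seqO x) k) := by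
    intro k
    simp only [R]
    rw [ZMod.val_natCast, hpar]
  have hR1 : ∀ a, R (a + 1) ↔ (R a ↔ pos (x a)) := by
    intro a
    have h1 := hRc (a.val + 1)
    push_cast at h1
    rw [ZMod.natCast_zmod_val] at h1
    rw [h1, negc_succ]
    have h2 : seqO x a.val = x a := by simp [seqO]
    rw [h2]
    simp only [R]
    split_ifs with hpos
    · simp [hpos]
    · rw [Nat.even_add_one]; tauto
  have hRp : ∀ a, R (a + p) ↔ ¬ R a := by
    intro a
    have h1 := hRc (a.val + p)
    push_cast at h1
    rw [ZMod.natCast_zmod_val] at h1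
    rw [h1, hadd, Nat.even_add]
    have := Nat.not_even_iff_odd.2 hodd
    simp only [R]
    tauto
  have hpp : (p : ZMod n) + p = 0 := by
    rw [← Nat.cast_add, ← two_mul, ← hp]; simp
  let q : ZMod n → ℕ := fun a => a.val % p
  have hq : ∀ a, q (a + p) = q a := by
    intro a
    simp only [q]
    have : (a + (p : ZMod n)) = ((a.val + p : ℕ) : ZMod n) := by
      push_cast; rw [ZMod.natCast_zmod_val]
    rw [this, ZMod.val_natCast, Nat.mod_mod_of_dvd _ (by rw [hp]; exact Dvd.intro_left 2 rfl)]
    simp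
  have hq2 : ∀ a b, q a = q b → a = b ∨ b = a + p := by
    intro a b hab
    simp only [q] at hab
    have ha := ZMod.val_lt a
    have hb := ZMod.val_lt b
    have hda : a.val / p < 2 := Nat.div_lt_of_lt_mul (by omega)
    have hdb : b.val / p < 2 := Nat.div_lt_of_lt_mul (by omega)
    have ea := Nat.mod_add_div a.val p
    have eb := Nat.mod_add_div b.val p
    have e1 : a = ((a.val : ℕ) : ZMod n) := by simp
    have e2 : b = ((b.val : ℕ) : ZMod n) := by simp
    have hcases : a.val = b.val ∨ b.val = a.val + p ∨ a.val = b.val + p := by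
      generalize a.val / p = u at *
      generalize b.val / p = v at *
      interval_cases u <;> interval_cases v <;> omega
    rcases hcases with h1 | h1 | h1
    · left; exact ZMod.val_injective n h1
    · right; rw [e2, h1]; push_cast; rw [ZMod.natCast_zmod_val]
    · right
      have : a = b + p := by rw [e1, h1]; push_cast; rw [ZMod.natCast_zmod_val]
      rw [this, add_assoc, hpp, add_zero]
  let r0 : ZMod n → ZMod n → Prop := fun a b => q a < q b ∨ (q a = q b ∧ R a ∧ ¬ R b)
  have hsto : STO r0 := by
    refine ⟨?_, ?_, ?_⟩
    · intro a ha
      rcases ha with ha | ha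
      · exact lt_irrefl _ ha
      · exact ha.2.2 ha.2.1
    · intro a b c hab hbc
      rcases hab with h1 | ⟨h1, h1', h1''⟩ <;> rcases hbc with h2 | ⟨h2, h2', h2''⟩
      · exact Or.inl (h1.trans h2)
      · exact Or.inl (h2 ▸ h1)
      · exact Or.inl (h1 ▸ h2)
      · exact absurd h2' h1''
    · intro a b hab
      rcases lt_trichotomy (q a) (q b) with h1 | h1 | h1
      · exact Or.inl (Or.inl h1)
      · rcases hq2 a b h1 with h2 | h2
        · exact absurd h2 hab
        · have := hRp a
          rw [← h2] at this
          by_cases ha : R a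
          · exact Or.inl (Or.inr ⟨h1, ha, by tauto⟩)
          · exact Or.inr (Or.inr ⟨h1.symm, by tauto, ha⟩)
      · exact Or.inr (Or.inl h1)
  have hr1 : ∀ a, r0 a (a + p) ↔ R a := by
    intro a
    simp only [r0, hq, lt_irrefl, false_or, true_and, hRp, not_not, and_self]
  have hr2 : ∀ a, r0 (a + p) a ↔ ¬ R a := by
    intro a
    simp only [r0, hq, lt_irrefl, false_or, true_and, hRp, and_self]
  apply exists_compat pos x r0 hsto
  intro a b hab
  rcases h _ hab with h1 | h1
  · have : a = b := (sub_eq_zero.1 h1).symm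
    subst this
    exact iff_of_false ((TR_sto pos x _ hsto).1 a) (hsto.1 a)
  · have : b = a + p := by rw [← h1]; ring
    rw [this, hr1]
    unfold TR
    rw [hper a, show a + p + 1 = a + 1 + p by ring, hr1, hr2, hR1]
    simp only [lt_irrefl, false_or, true_and]
    split_ifs <;> tauto

lemma card_B (pos : ℕ → Prop) {n m : ℕ} [NeZero n] (x : ZMod n → Fin m) (p : ℕ) (hp : n = 2 * p)
    (hper : PerO x (p : ZMod n)) (h : ∀ h, PerO x h → h = 0 ∨ h = p)
    (hodd : Odd (negc pos (seqO x) p)) :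
    (Finset.univ.filter fun φ : ZMod n ≃ Fin n => CompatO pos φ x).card = 2 := by
  obtain ⟨φ, hφ⟩ := exists_B pos x p hp hper h hodd
  have hp0 : 0 < p := by have := NeZero.ne n; omega
  have hpne : (p : ZMod n) ≠ 0 := by
    intro h0
    rw [ZMod.natCast_eq_zero_iff] at h0
    have := Nat.le_of_dvd hp0 h0
    omega
  have hpp : (p : ZMod n) + p = 0 := by
    rw [← Nat.cast_add, ← two_mul, ← hp]; simp
  let φ' : ZMod n ≃ Fin n := (Equiv.addRight (p : ZMod n)).trans φ
  have hφ'a : ∀ a, φ' a = φ (a + p) := fun a => rfl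
  have hφ' : CompatO pos φ' x := by
    intro a b hab
    have := hφ _ _ hab
    simp only [Equiv.coe_addRight, hper a, hper b] at this
    rw [hφ'a, hφ'a, show a + 1 + p = a + p + 1 by ring, show b + 1 + p = b + p + 1 by ring]
    exact this
  have hne : φ ≠ φ' := by
    intro he
    have := DFunLike.congr_fun he 0
    rw [hφ'a] at this
    have := φ.injective this
    simp at this
    exact hpne this.symm
  rw [Finset.card_eq_two]
  refine ⟨φ, φ', hne, ?_⟩
  ext ψ
  simp only [Finset.mem_filter, Finset.mem_univ, true_and, Finset.mem_insert, Finset.mem_singleton]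
  constructor
  · intro hψ
    by_cases hd : ∀ a b, ¬ DisO φ ψ a b
    · exact Or.inl (eq_of_no_dis hd).symm
    · right
      push Not at hd
      obtain ⟨a, b, hab⟩ := hd
      symm
      apply eq_of_no_dis
      intro c d hcd
      have h1 : b = a + p := by
        rcases h _ (dis_per hφ hψ hab) with h1 | h1
        · exact absurd h1 (dis_ne hab)
        · rw [← h1]; ring
      have h2 : d = c + p := by
        rcases h _ (dis_per hφ' hψ hcd) with h1 | h1
        · exact absurd h1 (dis_ne hcd)
        · rw [← h1]; ring
      have h3 := dis_iter hφ hψ hab (c - a).val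
      rw [ZMod.natCast_zmod_val, h1, show a + (c - a) = c by ring,
        show a + p + (c - a) = c + p by ring] at h3
      rw [h2] at hcd
      unfold DisO at h3 hcd
      rw [hφ'a, hφ'a, add_assoc, hpp, add_zero] at hcd
      rcases h3 with ⟨h3, h3'⟩ | ⟨h3, h3'⟩ <;> rcases hcd with ⟨h4, h4'⟩ | ⟨h4, h4'⟩
      · exact absurd h3 h4.asymm
      · exact absurd h3' h4'.asymm
      · exact absurd h3' h4'.asymm
      · exact absurd h3 h4.asymm
  · rintro (rfl | rfl)
    · exact hφ
    · exact hφ'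

lemma card_compat (pos : ℕ → Prop) {n m : ℕ} [NeZero n] (x : ZMod n → Fin m) :
    (Finset.univ.filter fun φ : ZMod n ≃ Fin n => CompatO pos φ x).card
    = (if Function.minimalPeriod shiftS (seqO x) = n then 1 else 0) +
      2 * (if 2 * Function.minimalPeriod shiftS (seqO x) = n ∧
        Odd (negc pos (seqO x) (Function.minimalPeriod shiftS (seqO x))) then 1 else 0) := by
  have hn : 0 < n := Nat.pos_of_ne_zero (NeZero.ne n)
  have hpn : Function.IsPeriodicPt shiftS n (seqO x) := by
    rw [seqO_per_iff]; intro a; simp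
  have hmp := Function.isPeriodicPt_minimalPeriod shiftS (seqO x)
  have hpos := hpn.minimalPeriod_pos hn
  have hdvd := hpn.minimalPeriod_dvd
  set p := Function.minimalPeriod shiftS (seqO x) with hpdef
  have hle := Nat.le_of_dvd hn hdvd
  have hP : ∀ h : ZMod n, PerO x h → p ∣ h.val := by
    intro h hh
    have : PerO x ((h.val : ℕ) : ZMod n) := by rwa [ZMod.natCast_zmod_val]
    exact ((seqO_per_iff x _).2 this).minimalPeriod_dvd
  have hPp : PerO x (p : ZMod n) := (seqO_per_iff x _).1 hmp
  by_cases h1 : p = n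
  · rw [if_pos h1, if_neg (by omega)]
    rw [card_A pos x]
    intro h hh
    have := hP h hh
    rw [h1] at this
    have := Nat.eq_zero_of_dvd_of_lt this (ZMod.val_lt h)
    exact (ZMod.val_eq_zero h).1 this
  · rw [if_neg h1]
    have hp0 : (p : ZMod n) ≠ 0 := by
      intro h0
      rw [ZMod.natCast_eq_zero_iff] at h0
      exact h1 (Nat.dvd_antisymm hdvd h0)
    by_cases h2 : 2 * p = n ∧ Odd (negc pos (seqO x) p)
    · rw [if_pos h2, card_B pos x p h2.1.symm hPp _ h2.2]
      intro h hh
      obtain ⟨c, hc⟩ := hP h hh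
      have hlt := ZMod.val_lt h
      have e : h = ((h.val : ℕ) : ZMod n) := by simp
      have : c < 2 := by
        by_contra hc2
        have : p * 2 ≤ p * c := Nat.mul_le_mul_left p (by omega)
        omega
      interval_cases c
      · left; exact (ZMod.val_eq_zero h).1 (by simpa using hc)
      · right; rw [e, hc]; simp
    · rw [if_neg h2]
      simp only [mul_zero, add_zero, Finset.card_eq_zero]
      rw [Finset.filter_eq_empty_iff]
      intro φ _ hφ
      apply h2
      refine ⟨?_, compat_odd hφ p hPp hp0⟩
      have := compat_two hφ p hPp hp0
      rw [ZMod.natCast_eq_zero_iff] at this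
      obtain ⟨c, hc⟩ := hdvd
      have hcc : c ∣ 2 := by
        rw [hc, mul_comm 2 p] at this
        exact Nat.dvd_of_mul_dvd_mul_left hpos this
      rcases (Nat.dvd_prime Nat.prime_two).1 hcc with h | h
      · rw [h, mul_one] at hc; exact absurd hc.symm h1
      · rw [hc, h, mul_comm]


lemma cyc_iff (n : ℕ) (hn : 2 ≤ n) (π : Equiv.Perm (Fin n)) :
    IsCyclicPerm n π ↔ (π.IsCycle ∧ π.support = Finset.univ) := by
  unfold IsCyclicPerm fullCycleType
  have hle : π.support.card ≤ n := by
    have := Finset.card_le_univ π.support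
    simpa using this
  constructor
  · intro h
    have h0 : n - π.support.card = 0 := by
      by_contra hc
      have : (1 : ℕ) ∈ ({n} : Multiset ℕ) := by
        rw [← h, Multiset.mem_add]
        exact Or.inr (Multiset.mem_replicate.2 ⟨hc, rfl⟩)
      rw [Multiset.mem_singleton] at this
      omega
    rw [h0, Multiset.replicate_zero, add_zero] at h
    refine ⟨Equiv.Perm.card_cycleType_eq_one.1 (by rw [h]; rfl), ?_⟩
    apply Finset.eq_univ_of_card
    rw [Fintype.card_fin]; omega
  · rintro ⟨h1, h2⟩
    rw [h1.cycleType, h2]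
    simp

def cj {n : ℕ} (φ : ZMod n ≃ Fin n) : Equiv.Perm (Fin n) :=
  φ.symm.trans ((Equiv.addRight (1 : ZMod n)).trans φ)

lemma cj_apply {n : ℕ} (φ : ZMod n ≃ Fin n) (a : ZMod n) : cj φ (φ a) = φ (a + 1) := by
  simp [cj]

lemma cj_pow {n : ℕ} (φ : ZMod n ≃ Fin n) (a : ZMod n) (k : ℕ) :
    ((cj φ) ^ k) (φ a) = φ (a + k) := by
  induction k with
  | zero => simp
  | succ k ih =>
    rw [pow_succ', Equiv.Perm.mul_apply, ih, cj_apply]; push_cast; rw [add_assoc]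

lemma cj_cyclic {n : ℕ} (hn : 2 ≤ n) (φ : ZMod n ≃ Fin n) : IsCyclicPerm n (cj φ) := by
  have : NeZero n := ⟨by omega⟩
  have : Fact (1 < n) := ⟨by omega⟩
  rw [cyc_iff n hn]
  have hne : ∀ i, cj φ i ≠ i := by
    intro i
    obtain ⟨a, rfl⟩ := φ.surjective i
    rw [cj_apply]
    intro h
    have := φ.injective h
    simp at this
  refine ⟨⟨φ 0, hne _, fun j _ => ?_⟩, ?_⟩
  · obtain ⟨b, rfl⟩ := φ.surjective j
    refine ⟨(b.val : ℤ), ?_⟩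
    rw [zpow_natCast, cj_pow]; simp
  · ext i; simp [hne i]

lemma card_cj {n : ℕ} (hn : 2 ≤ n) (π : Equiv.Perm (Fin n)) (hπ : IsCyclicPerm n π) :
    (haveI : NeZero n := ⟨by omega⟩; (Finset.univ.filter fun φ : ZMod n ≃ Fin n => cj φ = π).card) = n := by
  haveI : NeZero n := ⟨by omega⟩
  rw [cyc_iff n hn] at hπ
  obtain ⟨hc, hs⟩ := hπ
  have hord : orderOf π = n := by rw [hc.orderOf, hs]; simp
  have hne : ∀ i, π i ≠ i := by
    intro i
    rw [← Equiv.Perm.mem_support, hs]; exact Finset.mem_univ _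
  conv_rhs => rw [← Fintype.card_fin n, ← Finset.card_univ]
  refine Finset.card_bij (fun φ _ => φ 0) (fun _ _ => Finset.mem_univ _) ?_ ?_
  · intro φ hφ ψ hψ h
    simp only [Finset.mem_filter, Finset.mem_univ, true_and] at hφ hψ
    ext a
    have e1 := cj_pow φ 0 a.val
    have e2 := cj_pow ψ 0 a.val
    rw [ZMod.natCast_zmod_val, zero_add] at e1 e2
    rw [← e1, ← e2, hφ, hψ, h]
  · intro i _
    have hsurj : Function.Surjective fun a : ZMod n => (π ^ a.val) i := by
      intro j
      obtain ⟨k, hk⟩ := hc.exists_pow_eq (hne i) (hne j)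
      refine ⟨(k : ZMod n), ?_⟩
      simp only
      rw [ZMod.val_natCast, ← hk]
      have h3 := pow_mod_orderOf π k
      rw [hord] at h3
      rw [h3]
    have hbij := (Fintype.bijective_iff_surjective_and_card
      (fun a : ZMod n => (π ^ a.val) i)).2 ⟨hsurj, by simp [ZMod.card]⟩
    refine ⟨Equiv.ofBijective _ hbij, ?_, by simp⟩
    simp only [Finset.mem_filter, Finset.mem_univ, true_and]
    ext j : 1
    obtain ⟨a, rfl⟩ := hbij.2 j
    have := cj_apply (Equiv.ofBijective _ hbij) a
    rw [Equiv.ofBijective_apply, Equiv.ofBijective_apply] at this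
    rw [this, ← Equiv.Perm.mul_apply, ← pow_succ']
    have h2 : (a + 1) = ((a.val + 1 : ℕ) : ZMod n) := by simp
    rw [h2, ZMod.val_natCast]
    have h3 := pow_mod_orderOf π (a.val + 1)
    rw [hord] at h3
    rw [h3]

lemma valid_cj (pos : ℕ → Prop) {n m : ℕ} (φ : ZMod n ≃ Fin n) (f : Fin n → Fin m) :
    Valid pos (cj φ) f ↔ CompatO pos φ (f ∘ φ) := by
  unfold Valid CompatO
  constructor
  · intro h a b hab
    have := h _ _ hab
    rwa [cj_apply, cj_apply] at this
  · intro h i j hij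
    obtain ⟨a, rfl⟩ := φ.surjective i
    obtain ⟨b, rfl⟩ := φ.surjective j
    rw [cj_apply, cj_apply]
    exact h a b hij

lemma vcount_cj (pos : ℕ → Prop) {n : ℕ} [NeZero n] (m : ℕ) (φ : ZMod n ≃ Fin n) :
    vcount pos n m (cj φ) = (Finset.univ.filter fun x : ZMod n → Fin m => CompatO pos φ x).card := by
  unfold vcount
  refine Finset.card_bij (fun f _ => f ∘ φ) ?_ ?_ ?_
  · intro f hf
    simp only [Finset.mem_filter, Finset.mem_univ, true_and] at hf ⊢
    exact (valid_cj pos φ f).1 hf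
  · intro f _ g _ h
    funext i
    have := congrFun h (φ.symm i)
    simpa using this
  · intro x hx
    simp only [Finset.mem_filter, Finset.mem_univ, true_and] at hx
    have e : (x ∘ φ.symm) ∘ φ = x := by funext a; simp
    refine ⟨x ∘ φ.symm, ?_, e⟩
    simp only [Finset.mem_filter, Finset.mem_univ, true_and]
    rw [valid_cj, e]; exact hx

lemma sum_cyclic (pos : ℕ → Prop) (n m : ℕ) [NeZero n] (hn : 2 ≤ n) :
    n * ∑ π ∈ cyclicSet n, vcount pos n m π
    = ∑ x : ZMod n → Fin m, (Finset.univ.filter fun φ : ZMod n ≃ Fin n => CompatO pos φ x).card := by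
  have h1 : ∑ x : ZMod n → Fin m, (Finset.univ.filter fun φ : ZMod n ≃ Fin n => CompatO pos φ x).card
      = ∑ φ : ZMod n ≃ Fin n, (Finset.univ.filter fun x : ZMod n → Fin m => CompatO pos φ x).card := by
    simp only [Finset.card_filter]
    exact Finset.sum_comm
  rw [h1]
  rw [← Finset.sum_fiberwise_of_maps_to (s := Finset.univ) (t := cyclicSet n) (g := cj)
    (fun φ _ => by simp [cyclicSet, cj_cyclic hn])]
  rw [Finset.mul_sum]
  apply Finset.sum_congr rfl
  intro π hπ
  simp only [cyclicSet, Finset.mem_filter, Finset.mem_univ, true_and] at hπ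
  rw [Finset.sum_congr rfl (g := fun _ => vcount pos n m π)]
  · rw [Finset.sum_const]
    have := card_cj hn π hπ
    rw [smul_eq_mul]
    congr 1
    convert! this.symm
  · intro φ hφ
    simp only [Finset.mem_filter, Finset.mem_univ, true_and] at hφ
    rw [← vcount_cj, hφ]


lemma seqO_inj {n m : ℕ} [NeZero n] : Function.Injective (seqO : (ZMod n → Fin m) → ℕ → Fin m) := by
  intro x y h
  funext a
  have := congrFun h a.val
  simpa [seqO] using this

lemma seqO_per {n m : ℕ} [NeZero n] (x : ZMod n → Fin m) :
    Function.IsPeriodicPt shiftS n (seqO x) := by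
  rw [seqO_per_iff]; intro a; simp

lemma seqO_surj {n m : ℕ} [NeZero n] (y : ℕ → Fin m) (h : Function.IsPeriodicPt shiftS n y) :
    ∃ x : ZMod n → Fin m, seqO x = y := by
  refine ⟨fun a => y a.val, ?_⟩
  funext k
  simp only [seqO]
  rw [ZMod.val_natCast]
  have h1 := (per_iff _ _).1 h
  have h2 : ∀ j i, y (i + n * j) = y i := by
    intro j i
    induction j with
    | zero => simp
    | succ j ih => rw [mul_add, mul_one, ← add_assoc, h1, ih]
  conv_rhs => rw [← Nat.mod_add_div k n, h2]

lemma bridge (n m : ℕ) [NeZero n] (Q : (ℕ → Fin m) → Prop) :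
    (Finset.univ.filter fun x : ZMod n → Fin m => Q (seqO x)).card
    = Set.ncard {y : ℕ → Fin m | Function.IsPeriodicPt shiftS n y ∧ Q y} := by
  rw [← Set.ncard_coe_finset, ← Set.ncard_image_of_injective _ (seqO_inj (n := n) (m := m))]
  congr 1
  ext y
  simp only [Set.mem_image, Finset.coe_filter, Finset.mem_univ, true_and, Set.mem_ofPred_eq]
  constructor
  · rintro ⟨x, hx, rfl⟩; exact ⟨seqO_per x, hx⟩
  · rintro ⟨h, hQ⟩
    obtain ⟨x, rfl⟩ := seqO_surj y h
    exact ⟨x, hQ, rfl⟩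

def NQ {m : ℕ} (Q : (ℕ → Fin m) → Prop) (d : ℕ) : ℕ :=
  Set.ncard {y : ℕ → Fin m | Function.minimalPeriod shiftS y = d ∧ Q y}

lemma bridge_d (n m d : ℕ) [NeZero n] (hd : d ∣ n) (Q : (ℕ → Fin m) → Prop) :
    (Finset.univ.filter fun x : ZMod n → Fin m =>
      Function.minimalPeriod shiftS (seqO x) = d ∧ Q (seqO x)).card = NQ Q d := by
  refine (Eq.trans (by congr!) (bridge n m (fun y => Function.minimalPeriod shiftS y = d ∧ Q y))).trans ?_
  unfold NQ
  congr 1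
  ext y
  simp only [Set.mem_ofPred_eq, and_iff_right_iff_imp]
  rintro ⟨h, -⟩
  rw [Function.isPeriodicPt_iff_minimalPeriod_dvd, h]; exact hd

lemma sum_div (n m : ℕ) [NeZero n] (Q : (ℕ → Fin m) → Prop) :
    (Finset.univ.filter fun x : ZMod n → Fin m => Q (seqO x)).card
    = ∑ d ∈ n.divisors, NQ Q d := by
  rw [Finset.card_eq_sum_card_fiberwise (t := n.divisors)
    (f := fun x => Function.minimalPeriod shiftS (seqO x))]
  · apply Finset.sum_congr rfl
    intro d hd
    rw [← bridge_d n m d (Nat.dvd_of_mem_divisors hd) Q, Finset.filter_filter]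
    congr 1
    ext x
    simp only [Finset.mem_filter, Finset.mem_univ, true_and]
    tauto
  · intro x _
    simp only [Finset.mem_coe, Nat.mem_divisors]
    exact ⟨(seqO_per x).minimalPeriod_dvd, NeZero.ne n⟩

def Pm (m d : ℕ) : ℕ := NQ (m := m) (fun _ => True) d
def Om (m d : ℕ) : ℕ := NQ (m := m) (fun y => Odd (negc Even y d)) d

lemma sum_Pm (n m : ℕ) (hn : 0 < n) : ∑ d ∈ n.divisors, Pm m d = m ^ n := by
  have : NeZero n := ⟨hn.ne'⟩
  have := sum_div n m (fun _ => True)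
  unfold Pm
  rw [← this]
  simp [ZMod.card]

lemma sum_Om (n m : ℕ) [NeZero n] :
    (Finset.univ.filter fun x : ZMod n → Fin m => Odd (negc Even (seqO x) n)).card
    = ∑ d ∈ n.divisors, if Odd (n / d) then Om m d else 0 := by
  refine (Eq.trans (by congr!) (sum_div n m (fun y => Odd (negc Even y n)))).trans ?_
  apply Finset.sum_congr rfl
  intro d hd
  obtain ⟨c, hc⟩ := Nat.dvd_of_mem_divisors hd
  have hd0 := Nat.pos_of_mem_divisors hd
  have hnd : n / d = c := by rw [hc, Nat.mul_div_cancel_left _ hd0]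
  rw [hnd]
  have key : ∀ y : ℕ → Fin m, Function.minimalPeriod shiftS y = d →
      (Odd (negc Even y n) ↔ Odd c ∧ Odd (negc Even y d)) := by
    intro y hy
    have hp := Function.isPeriodicPt_minimalPeriod shiftS y
    rw [hy, per_iff] at hp
    rw [hc, mul_comm, negc_mul _ _ _ hp, Nat.odd_mul]
  split_ifs with h
  · unfold Om NQ
    congr 1
    ext y
    simp only [Set.mem_ofPred_eq]
    constructor
    · rintro ⟨h1, h2⟩; exact ⟨h1, ((key y h1).1 h2).2⟩
    · rintro ⟨h1, h2⟩; exact ⟨h1, (key y h1).2 ⟨h, h2⟩⟩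
  · unfold NQ
    refine Eq.trans (congrArg Set.ncard (Set.eq_empty_iff_forall_notMem.2 ?_)) (Set.ncard_empty _)
    rintro y ⟨h1, h2⟩
    exact h ((key y h1).1 h2).1

lemma negc_sign {m : ℕ} (y : ℕ → Fin m) (k : ℕ) :
    (-1 : ℤ) ^ negc Even y k = ∏ i ∈ Finset.range k, (-1 : ℤ) ^ (y i : ℕ) := by
  induction k with
  | zero => simp [negc]
  | succ k ih =>
    rw [negc_succ, Finset.prod_range_succ, pow_add, ih]
    congr 1
    split_ifs with h
    · rw [h.neg_one_pow]; simp
    · rw [(Nat.not_even_iff_odd.1 h).neg_one_pow]; simp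

lemma odd_words (n m : ℕ) [NeZero n] :
    2 * ((Finset.univ.filter fun x : ZMod n → Fin m => Odd (negc Even (seqO x) n)).card : ℤ)
      = m ^ n - if Odd m then 1 else 0 := by
  have h1 : ∑ x : ZMod n → Fin m, (-1 : ℤ) ^ negc Even (seqO x) n = if Odd m then 1 else 0 := by
    obtain ⟨k, rfl⟩ : ∃ k, n = k + 1 := ⟨n - 1, by have := NeZero.ne n; omega⟩
    have e : ∀ x : ZMod (k + 1) → Fin m, (-1 : ℤ) ^ negc Even (seqO x) (k + 1)
        = ∏ i : Fin (k + 1), (-1 : ℤ) ^ ((x : Fin (k + 1) → Fin m) i : ℕ) := by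
      intro x
      rw [negc_sign, Finset.prod_range]
      apply Finset.prod_congr rfl
      intro i _
      have : seqO x i = x i := by
        unfold seqO
        congr 1
        exact Fin.cast_val_eq_self i
      rw [this]
    rw [Finset.sum_congr rfl (fun x _ => e x)]
    have := Fintype.sum_pow (fun v : Fin m => (-1 : ℤ) ^ (v : ℕ)) (k + 1)
    refine Eq.trans (Eq.trans ?_ this.symm) ?_
    · rfl
    · rw [Fin.sum_univ_eq_sum_range (fun i => (-1 : ℤ) ^ i) m, neg_one_geom_sum]
      by_cases h : Odd m
      · simp [h, Nat.not_even_iff_odd.2 h]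
      · simp [h, Nat.not_odd_iff_even.1 h]
  have h2 : ∀ x : ZMod n → Fin m, (-1 : ℤ) ^ negc Even (seqO x) n
      = 1 - 2 * (if Odd (negc Even (seqO x) n) then 1 else 0) := by
    intro x
    split_ifs with h
    · rw [h.neg_one_pow]; norm_num
    · rw [(Nat.not_odd_iff_even.1 h).neg_one_pow]; norm_num
  rw [Finset.sum_congr rfl (fun x _ => h2 x), Finset.sum_sub_distrib, ← Finset.mul_sum,
    Finset.sum_boole] at h1
  simp [ZMod.card] at h1
  rw [← h1]; ring

def Tm (m n : ℕ) : ℕ := Pm m n + 2 * (if Even n then Om m (n / 2) else 0)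

lemma cyclic_Tm (n m : ℕ) (hn : 2 ≤ n) :
    n * ∑ π ∈ cyclicSet n, vcount Even n m π = Tm m n := by
  have : NeZero n := ⟨by omega⟩
  rw [sum_cyclic Even n m hn, Finset.sum_congr rfl (fun x _ => card_compat Even x),
    Finset.sum_add_distrib, ← Finset.mul_sum, Finset.sum_boole, Finset.sum_boole]
  simp only [Nat.cast_id]
  unfold Tm Pm
  rw [← bridge_d n m n dvd_rfl]
  congr 1
  · simp
  · congr 1
    split_ifs with h
    · obtain ⟨c, hc⟩ := h
      unfold Om
      rw [← bridge_d n m (n / 2) (Nat.div_dvd_of_dvd ⟨c, by omega⟩)]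
      congr 1
      ext x
      simp only [Finset.mem_filter, Finset.mem_univ, true_and]
      constructor
      · rintro ⟨h1, h2⟩
        have : Function.minimalPeriod shiftS (seqO x) = n / 2 := by omega
        rw [this] at h2
        exact ⟨this, h2⟩
      · rintro ⟨h1, h2⟩
        refine ⟨by omega, by rwa [h1]⟩
    · rw [Finset.card_eq_zero, Finset.filter_eq_empty_iff]
      rintro x - ⟨h1, -⟩
      exact h ⟨Function.minimalPeriod shiftS (seqO x), by omega⟩


lemma divisors_two_pow (a r : ℕ) (hr : Odd r) (f : ℕ → ℤ) :
    ∑ d ∈ (2 ^ a * r).divisors, f d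
      = ∑ c ∈ Finset.range (a + 1), ∑ i ∈ r.divisors, f (2 ^ c * i) := by
  have hr0 : r ≠ 0 := by rintro rfl; simp at hr
  rw [← Finset.sum_product']
  symm
  refine Finset.sum_bij (fun p _ => 2 ^ p.1 * p.2) ?_ ?_ ?_ (fun _ _ => rfl)
  · rintro ⟨c, i⟩ h
    simp only [Finset.mem_product, Finset.mem_range, Nat.mem_divisors] at h ⊢
    exact ⟨Nat.mul_dvd_mul (pow_dvd_pow 2 (by omega)) h.2.1, by positivity⟩
  · rintro ⟨c, i⟩ h ⟨c', i'⟩ h' he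
    simp only [Finset.mem_product, Finset.mem_range, Nat.mem_divisors] at h h' he
    have hi : Odd i := Odd.of_dvd_nat hr h.2.1
    have hi' : Odd i' := Odd.of_dvd_nat hr h'.2.1
    have k1 : c ≤ c' := by
      have : 2 ^ c ∣ 2 ^ c' * i' := ⟨i, he.symm⟩
      have := Nat.Coprime.dvd_of_dvd_mul_right (Nat.Coprime.pow_left c (Nat.coprime_two_left.2 hi')) this
      exact (Nat.pow_dvd_pow_iff_le_right (by norm_num)).1 this
    have k2 : c' ≤ c := by
      have : 2 ^ c' ∣ 2 ^ c * i := ⟨i', he⟩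
      have := Nat.Coprime.dvd_of_dvd_mul_right (Nat.Coprime.pow_left c' (Nat.coprime_two_left.2 hi)) this
      exact (Nat.pow_dvd_pow_iff_le_right (by norm_num)).1 this
    have : c = c' := le_antisymm k1 k2
    subst this
    have := Nat.eq_of_mul_eq_mul_left (by positivity) he
    rw [this]
  · intro d hd
    rw [Nat.mem_divisors] at hd
    have hd0 : d ≠ 0 := by
      rintro rfl
      exact hd.2 (Nat.eq_zero_of_zero_dvd hd.1)
    obtain ⟨c, i, hi, rfl⟩ := Nat.exists_eq_two_pow_mul_odd hd0
    refine ⟨(c, i), ?_, rfl⟩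
    simp only [Finset.mem_product, Finset.mem_range, Nat.mem_divisors]
    have k1 : 2 ^ c ∣ 2 ^ a := by
      have : 2 ^ c ∣ 2 ^ a * r := (Dvd.intro _ rfl).trans hd.1
      exact Nat.Coprime.dvd_of_dvd_mul_right (Nat.Coprime.pow_left c (Nat.coprime_two_left.2 hr)) this
    have k2 : i ∣ r := by
      have : i ∣ 2 ^ a * r := (Dvd.intro_left _ rfl).trans hd.1
      exact Nat.Coprime.dvd_of_dvd_mul_left (Nat.Coprime.pow_right a (Nat.coprime_two_right.2 hi)) this
    have := (Nat.pow_dvd_pow_iff_le_right (by norm_num)).1 k1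
    exact ⟨by omega, k2, hr0⟩

lemma sum_T (a r m : ℕ) (hr : Odd r) :
    ∑ i ∈ r.divisors, (Tm m (2 ^ a * i) : ℤ)
      = m ^ (2 ^ a * r) - if a ≠ 0 ∧ Odd m then 1 else 0 := by
  have hr0 : 0 < r := hr.pos
  cases a with
  | zero =>
    have := sum_Pm r m hr0
    simp only [pow_zero, one_mul, ne_eq, not_true_eq_false, false_and, if_false, sub_zero]
    rw [← Nat.cast_pow, ← this, Nat.cast_sum]
    apply Finset.sum_congr rfl
    intro i hi
    have hi : Odd i := Odd.of_dvd_nat hr (Nat.dvd_of_mem_divisors hi)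
    simp [Tm, Nat.not_even_iff_odd.2 hi]
  | succ b =>
    have hT : ∀ i, (Tm m (2 ^ (b + 1) * i) : ℤ)
        = (Pm m (2 ^ (b + 1) * i) : ℤ) + 2 * (Om m (2 ^ b * i) : ℤ) := by
      intro i
      have e : 2 ^ (b + 1) * i = 2 * (2 ^ b * i) := by ring
      unfold Tm
      rw [e, if_pos (even_two_mul _), Nat.mul_div_cancel_left _ (by norm_num)]
      push_cast; rfl
    rw [Finset.sum_congr rfl (fun i _ => hT i), Finset.sum_add_distrib, ← Finset.mul_sum]
    have p1 := sum_Pm (2 ^ (b + 1) * r) m (by positivity)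
    have p0 := sum_Pm (2 ^ b * r) m (by positivity)
    have p1' := divisors_two_pow (b + 1) r hr (fun d => (Pm m d : ℤ))
    have p0' := divisors_two_pow b r hr (fun d => (Pm m d : ℤ))
    rw [← Nat.cast_sum, p1, Finset.sum_range_succ] at p1'
    rw [← Nat.cast_sum, p0] at p0'
    rw [← p0'] at p1'
    have : NeZero (2 ^ b * r) := ⟨by positivity⟩
    have o1 := odd_words (2 ^ b * r) m
    rw [sum_Om] at o1
    rw [Nat.cast_sum, divisors_two_pow b r hr, Finset.sum_range_succ,
      Finset.sum_eq_zero (s := Finset.range b), zero_add] at o1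
    · have o2 : ∑ i ∈ r.divisors, (((if Odd (2 ^ b * r / (2 ^ b * i)) then Om m (2 ^ b * i) else 0 : ℕ)) : ℤ)
          = ∑ i ∈ r.divisors, (Om m (2 ^ b * i) : ℤ) := by
        apply Finset.sum_congr rfl
        intro i hi
        have hi := Nat.dvd_of_mem_divisors hi
        rw [Nat.mul_div_mul_left _ _ (by positivity), if_pos]
        exact Odd.of_dvd_nat hr (Nat.div_dvd_of_dvd hi)
      rw [o2] at o1
      rw [o1]
      push_cast at p1'
      simp only [ne_eq, Nat.add_eq_zero_iff, one_ne_zero, and_false, not_false_eq_true, true_and]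
      linarith
    · intro c hc
      apply Finset.sum_eq_zero
      intro i hi
      have hc := Finset.mem_range.1 hc
      obtain ⟨j, hj⟩ := Nat.dvd_of_mem_divisors hi
      have hi0 := Nat.pos_of_mem_divisors hi
      rw [if_neg]
      · rfl
      · have e : 2 ^ b * r = (2 ^ c * i) * (2 ^ (b - c) * j) := by
          rw [hj]
          have : 2 ^ b = 2 ^ c * 2 ^ (b - c) := by rw [← pow_add]; congr 1; omega
          rw [this]; ring
        rw [e, Nat.mul_div_cancel_left _ (by positivity), Nat.not_odd_iff_even]
        exact ((Nat.even_pow.2 ⟨even_two, by omega⟩)).mul_right _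

lemma T_formula (a r m : ℕ) (hr : Odd r) :
    (Tm m (2 ^ a * r) : ℤ) = ∑ d ∈ r.divisors, (ArithmeticFunction.moebius d : ℤ)
      * ((m : ℤ) ^ (2 ^ a * (r / d)) - if a ≠ 0 ∧ Odd m then 1 else 0) := by
  have h := (ArithmeticFunction.sum_eq_iff_sum_mul_moebius_eq_on (R := ℤ)
    (f := fun i => (Tm m (2 ^ a * i) : ℤ))
    (g := fun i => (m : ℤ) ^ (2 ^ a * i) - if a ≠ 0 ∧ Odd m then 1 else 0)
    {i | Odd i} (fun x y hxy hy => Odd.of_dvd_nat hy hxy)).1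
    (fun i _ hi => sum_T a i m hi) r hr.pos hr
  rw [← h]
  have := Nat.sum_divisorsAntidiagonal (n := r) (fun i j => (ArithmeticFunction.moebius i : ℤ)
      * ((m : ℤ) ^ (2 ^ a * j) - if a ≠ 0 ∧ Odd m then 1 else 0))
  rw [← this]
  simp

lemma T_pow2 (n m : ℕ) (hn : 2 ≤ n) (h : ∃ j, n = 2 ^ j) :
    (Tm m n : ℤ) = (m : ℤ) ^ n - if Odd m then 1 else 0 := by
  obtain ⟨j, rfl⟩ := h
  have := T_formula j 1 m odd_one
  have hj : j ≠ 0 := by rintro rfl; simp at hn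
  simpa [hj] using this

lemma T_other (n m : ℕ) (hn : 2 ≤ n) (h : ¬ ∃ j, n = 2 ^ j) :
    (Tm m n : ℤ) = ∑ d ∈ n.divisors.filter (fun d => Odd d),
      (ArithmeticFunction.moebius d : ℤ) * (m : ℤ) ^ (n / d) := by
  obtain ⟨a, r, hr, rfl⟩ := Nat.exists_eq_two_pow_mul_odd (show n ≠ 0 by omega)
  have hr1 : r ≠ 1 := by rintro rfl; exact h ⟨a, by simp⟩
  rw [T_formula a r m hr]
  have hd : (2 ^ a * r).divisors.filter (fun d => Odd d) = r.divisors := by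
    ext d
    simp only [Finset.mem_filter, Nat.mem_divisors]
    constructor
    · rintro ⟨⟨h1, _⟩, h2⟩
      exact ⟨Nat.Coprime.dvd_of_dvd_mul_left (Nat.Coprime.pow_right a (Nat.coprime_two_right.2 h2)) h1,
        hr.pos.ne'⟩
    · rintro ⟨h1, _⟩
      exact ⟨⟨h1.mul_left _, by omega⟩, Odd.of_dvd_nat hr h1⟩
  rw [hd]
  simp only [mul_sub, Finset.sum_sub_distrib]
  rw [← Finset.sum_mul]
  have hmu : ∑ d ∈ r.divisors, (ArithmeticFunction.moebius d : ℤ) = 0 := by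
    have h1 : (ArithmeticFunction.moebius * (ArithmeticFunction.zeta : ArithmeticFunction ℤ)) r = 0 := by
      rw [ArithmeticFunction.moebius_mul_coe_zeta, ArithmeticFunction.one_apply_ne hr1]
    rwa [ArithmeticFunction.coe_mul_zeta_apply] at h1
  rw [hmu, zero_mul, sub_zero]
  apply Finset.sum_congr rfl
  intro d hd
  rw [Nat.mul_div_assoc _ (Nat.dvd_of_mem_divisors hd)]


section
open PowerSeries

lemma coe_comp_sq (p : Polynomial ℚ) :
    ((p.comp (Polynomial.X ^ 2) : Polynomial ℚ) : PowerSeries ℚ)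
      = PowerSeries.expand 2 two_ne_zero (p : PowerSeries ℚ) := by
  rw [← Polynomial.expand_eq_comp_X_pow]
  ext k
  rw [Polynomial.coeff_coe, PowerSeries.coeff_expand, Polynomial.coeff_expand (by norm_num),
    Polynomial.coeff_coe]

lemma series_split (k : ℕ) (hk : 1 ≤ k) :
    (2 : PowerSeries ℚ) ^ k * PowerSeries.expand 2 two_ne_zero (mk fun i => (i : ℚ) ^ k)
      + X * PowerSeries.expand 2 two_ne_zero (mk fun i => ((2 * i + 1 : ℕ) : ℚ) ^ k)
      = mk fun m => (m : ℚ) ^ k := by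
  ext m
  have e2 : (2 : PowerSeries ℚ) ^ k = C ((2 : ℚ) ^ k) := by rw [map_pow, map_ofNat]
  rw [map_add, e2, coeff_C_mul, coeff_mk]
  rcases Nat.even_or_odd' m with ⟨c, rfl | rfl⟩
  · rw [PowerSeries.coeff_expand_mul, coeff_mk]
    have : coeff (2 * c) (X * PowerSeries.expand 2 two_ne_zero (mk fun i => ((2 * i + 1 : ℕ) : ℚ) ^ k)) = 0 := by
      cases c with
      | zero => simp
      | succ c =>
        rw [show 2 * (c + 1) = (2 * c + 1) + 1 by ring, coeff_succ_X_mul,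
          PowerSeries.coeff_expand_of_not_dvd _ _ _ (by omega)]
    rw [this]; push_cast; ring
  · rw [PowerSeries.coeff_expand_of_not_dvd _ _ _ (by omega), coeff_succ_X_mul,
      PowerSeries.coeff_expand_mul, coeff_mk]; simp

lemma rhs_gf (k : ℕ) (hk : 1 ≤ k) (Bk : Polynomial ℚ)
    (hB : (Bk : PowerSeries ℚ) = (1 - X) ^ (k + 1) * mk (fun i => ((2 * i + 1 : ℕ) : ℚ) ^ k)) :
    (2 : PowerSeries ℚ) ^ k * (((eulerianA k).comp (Polynomial.X ^ 2) : Polynomial ℚ) : PowerSeries ℚ)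
      + X * ((Bk.comp (Polynomial.X ^ 2) : Polynomial ℚ) : PowerSeries ℚ)
    = (1 - X ^ 2) ^ (k + 1) * mk fun m => (m : ℚ) ^ k := by
  rw [coe_comp_sq, coe_comp_sq, euler_gf k hk, hB]
  have hs := series_split k hk
  simp only [map_mul, map_pow, map_sub, map_one, PowerSeries.expand_X]
  generalize PowerSeries.expand 2 two_ne_zero (mk fun i => (i : ℚ) ^ k) = u at *
  rw [← hs]
  ring

lemma odd_gf : (X : PowerSeries ℚ) = (1 - X ^ 2) * mk fun m => if Odd m then (1 : ℚ) else 0 := by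
  ext m
  rw [sub_mul, one_mul, map_sub, coeff_mk, coeff_X_pow_mul', coeff_X]
  by_cases h2 : 2 ≤ m
  · rw [if_pos h2, coeff_mk, if_neg (by omega)]
    have : Odd (m - 2) ↔ Odd m := by rw [Nat.odd_sub h2]; simp
    simp [this]
  · interval_cases m <;> simp

lemma lhs_gf (n : ℕ) (hn : 2 ≤ n) :
    ((((n : Polynomial ℚ) * (1 + Polynomial.X) ^ 2
          * ∑ π ∈ cyclicSet n,
              (2 : Polynomial ℚ) ^ udr n π * Polynomial.X ^ udr n π
                * (1 + Polynomial.X ^ 2) ^ (n - udr n π) : Polynomial ℚ)) : PowerSeries ℚ)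
    = 2 * (1 - X ^ 2) ^ (n + 1) * mk fun m => ((Tm m n : ℤ) : ℚ) := by
  have h1 : (((∑ π ∈ cyclicSet n,
              (2 : Polynomial ℚ) ^ udr n π * Polynomial.X ^ udr n π
                * (1 + Polynomial.X ^ 2) ^ (n - udr n π) : Polynomial ℚ)) : PowerSeries ℚ)
      = ∑ π ∈ cyclicSet n, ((2 : PowerSeries ℚ) ^ udr n π * X ^ udr n π
                * (1 + X ^ 2) ^ (n - udr n π)) := by
    rw [← Polynomial.coeToPowerSeries.ringHom_apply, map_sum]
    apply Finset.sum_congr rfl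
    intro π _
    simp only [map_mul, map_pow, map_add, map_one, Polynomial.coeToPowerSeries.ringHom_apply,
      Polynomial.coe_X, map_ofNat]
  have h2 : (mk fun m => ((Tm m n : ℤ) : ℚ))
      = (n : PowerSeries ℚ) * ∑ π ∈ cyclicSet n, mk fun m => (vcount Even n m π : ℚ) := by
    ext m
    rw [coeff_mk, ← cyclic_Tm n m hn]
    have : (n : PowerSeries ℚ) = C (n : ℚ) := by simp
    rw [this, coeff_C_mul, map_sum]
    simp
  have h3 : (((n : Polynomial ℚ) * (1 + Polynomial.X) ^ 2 : Polynomial ℚ) : PowerSeries ℚ)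
      = (n : PowerSeries ℚ) * (1 + X) ^ 2 := by
    rw [← Polynomial.coeToPowerSeries.ringHom_apply]
    simp only [map_mul, map_pow, map_add, map_one, map_natCast, Polynomial.coeToPowerSeries.ringHom_apply,
      Polynomial.coe_X]
  rw [Polynomial.coe_mul, h3, h1, h2, mul_assoc, Finset.mul_sum,
    Finset.sum_congr rfl (fun π _ => udr_gf n (by omega) π), ← Finset.mul_sum]
  ring

end

theorem stmt9 (n : ℕ) (hn : 2 ≤ n) (B : ℕ → Polynomial ℚ)
    (hB : ∀ m : ℕ, ((B m : PowerSeries ℚ))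
      = (1 - PowerSeries.X) ^ (m + 1)
          * PowerSeries.mk (fun k => ((2 * k + 1 : ℕ) : ℚ) ^ m)) :
    ((∃ j : ℕ, n = 2 ^ j) →
      (n : Polynomial ℚ) * (1 + Polynomial.X) ^ 2
          * ∑ π ∈ cyclicSet n,
              (2 : Polynomial ℚ) ^ udr n π * Polynomial.X ^ udr n π
                * (1 + Polynomial.X ^ 2) ^ (n - udr n π)
        = 2 * (2 ^ n * (eulerianA n).comp (Polynomial.X ^ 2)
            + Polynomial.X * (B n).comp (Polynomial.X ^ 2)
            - Polynomial.X * (1 - Polynomial.X ^ 2) ^ n)) ∧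
    (¬ (∃ j : ℕ, n = 2 ^ j) →
      (n : Polynomial ℚ) * (1 + Polynomial.X) ^ 2
          * ∑ π ∈ cyclicSet n,
              (2 : Polynomial ℚ) ^ udr n π * Polynomial.X ^ udr n π
                * (1 + Polynomial.X ^ 2) ^ (n - udr n π)
        = 2 * ∑ d ∈ n.divisors.filter (fun d => Odd d),
            ((ArithmeticFunction.moebius d : ℤ) : Polynomial ℚ)
              * (1 - Polynomial.X ^ 2) ^ (n - n / d)
              * (2 ^ (n / d) * (eulerianA (n / d)).comp (Polynomial.X ^ 2)
                  + Polynomial.X * (B (n / d)).comp (Polynomial.X ^ 2))) := by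
  refine ⟨fun h => ?_, fun h => ?_⟩
  · apply Polynomial.coe_injective ℚ
    rw [lhs_gf n hn]
    have hR := rhs_gf n (by omega) (B n) (hB n)
    rw [← Polynomial.coeToPowerSeries.ringHom_apply]
    simp only [map_mul, map_pow, map_add, map_sub, map_one, map_ofNat,
      Polynomial.coeToPowerSeries.ringHom_apply, Polynomial.coe_X]
    rw [hR]
    have hT : (PowerSeries.mk fun m => ((Tm m n : ℤ) : ℚ))
        = (PowerSeries.mk fun m => (m : ℚ) ^ n) - PowerSeries.mk fun m => if Odd m then (1 : ℚ) else 0 := by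
      ext m
      rw [map_sub, PowerSeries.coeff_mk, PowerSeries.coeff_mk, PowerSeries.coeff_mk, T_pow2 n m hn h]
      push_cast; rfl
    rw [hT]
    linear_combination (-2 * (1 - (PowerSeries.X : PowerSeries ℚ) ^ 2) ^ n) * (-odd_gf)
  · apply Polynomial.coe_injective ℚ
    rw [lhs_gf n hn]
    rw [← Polynomial.coeToPowerSeries.ringHom_apply]
    simp only [map_mul, map_pow, map_add, map_sub, map_one, map_ofNat, map_sum, map_intCast,
      Polynomial.coeToPowerSeries.ringHom_apply, Polynomial.coe_X]
    have hT : (PowerSeries.mk fun m => ((Tm m n : ℤ) : ℚ))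
        = ∑ d ∈ n.divisors.filter (fun d => Odd d),
          ((ArithmeticFunction.moebius d : ℤ) : PowerSeries ℚ) * PowerSeries.mk fun m => (m : ℚ) ^ (n / d) := by
      ext m
      rw [PowerSeries.coeff_mk, T_other n m hn h, map_sum]
      push_cast
      apply Finset.sum_congr rfl
      intro d _
      have : ((ArithmeticFunction.moebius d : ℤ) : PowerSeries ℚ)
        = PowerSeries.C ((ArithmeticFunction.moebius d : ℤ) : ℚ) := by simp
      rw [this, PowerSeries.coeff_C_mul, PowerSeries.coeff_mk]
    rw [hT, mul_assoc, Finset.mul_sum]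
    congr 1
    apply Finset.sum_congr rfl
    intro d hd
    have hd := (Finset.mem_filter.1 hd).1
    have hdvd := Nat.dvd_of_mem_divisors hd
    have hle : n / d ≤ n := Nat.div_le_self _ _
    have hpos : 1 ≤ n / d := Nat.div_pos (Nat.le_of_dvd (by omega) hdvd) (Nat.pos_of_mem_divisors hd)
    rw [rhs_gf (n / d) hpos (B (n / d)) (hB _)]
    have : (1 - (PowerSeries.X : PowerSeries ℚ) ^ 2) ^ (n + 1)
        = (1 - PowerSeries.X ^ 2) ^ (n - n / d) * (1 - PowerSeries.X ^ 2) ^ (n / d + 1) := by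
      rw [← pow_add]; congr 1; omega
    rw [this]; ring

end
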